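/- Fix δ ≥ 0, a symbol a of order 0, and the bump β, and set b = √2 sin((θ₁−θ₂+π)/2). For j ≥ 1 define H(r₁,r₂;θ₁−θ₂) = 2^{−j(3/2+δ)} β(r₁+r₂) ∫₀^∞ e^{i 2^j (r₁ r₂/(r₁+r₂)) s²} ψ_{3,m}(s) ds, where ψ_{3,m}(s) = (r₁+r₂)^{−3/2−δ} a(2^j(r₁+r₂)) · sin(θ₁−θ₂+π) / (s²/2 + 2 sin²((θ₁−θ₂+π)/2)). Let χ ∈ C_c^∞(ℝ) be an even bump function supported in [−ε, ε] with 0 < ε ≪ 1 sufficiently small. Then there is a constant C, independent of j, such that for all j ≥ 1 and all f ∈ L²(ℝ²), ‖ ∫₀^∞ ∫₀^{2π} χ(b) H(r₁,r₂;θ₁−θ₂) f(r₂,θ₂) dθ₂ r₂ dr₂ ‖_{L²(ℝ²)} ≤ C 2^{−j(3/2+δ)} 2^{−j/2} ‖f‖_{L²(ℝ²)}. -/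

import Mathlib

open MeasureTheory Real Set

noncomputable section

/-- A symbol of order `0` on `(0, ∞)`. -/
def IsSymbol0 (a : ℝ → ℂ) : Prop :=
  ContDiffOn ℝ (⊤ : ℕ∞) a (Set.Ioi 0) ∧ (∃ M : ℝ, ∀ r > (0 : ℝ), ‖a r‖ ≤ M) ∧
    ∀ N : ℕ, ∃ C : ℝ, ∀ r > (0 : ℝ),
      ‖iteratedDerivWithin N a (Set.Ioi 0) r‖ ≤ C * r ^ (-(N : ℝ))

/-- `ψ_{3,m}(s)`, with `φ = θ₁ - θ₂`. -/
def psi3m (δ : ℝ) (a : ℝ → ℂ) (j : ℕ) (r₁ r₂ φ s : ℝ) : ℂ :=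
  (((r₁ + r₂) ^ (-(3 / 2 + δ)) : ℝ) : ℂ) * a ((2 : ℝ) ^ (j : ℝ) * (r₁ + r₂)) *
    ((Real.sin (φ + Real.pi) /
        (s ^ 2 / 2 + 2 * Real.sin ((φ + Real.pi) / 2) ^ 2) : ℝ) : ℂ)

/-- The kernel `H` with quadratic phase. -/
def Hker (δ : ℝ) (a : ℝ → ℂ) (β : ℝ → ℝ) (j : ℕ) (r₁ r₂ φ : ℝ) : ℂ :=
  (((2 : ℝ) ^ (-(j : ℝ) * (3 / 2 + δ)) : ℝ) : ℂ) * ((β (r₁ + r₂) : ℝ) : ℂ) *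
    ∫ s in Set.Ioi (0 : ℝ),
      Complex.exp (Complex.I *
        (((2 : ℝ) ^ (j : ℝ) * (r₁ * r₂ / (r₁ + r₂)) * s ^ 2 : ℝ) : ℂ)) *
        psi3m δ a j r₁ r₂ φ s

/-- `b = √2 sin((θ₁ - θ₂ + π)/2)`, as a function of `φ = θ₁ - θ₂`. -/
def bb (φ : ℝ) : ℝ := Real.sqrt 2 * Real.sin ((φ + Real.pi) / 2)

open scoped ENNReal NNReal

/-- The `L^p(ℝ²)` norm of a function written in polar coordinates. -/
def polarLp (p : ℝ) (g : ℝ → ℝ → ℂ) : ℝ≥0∞ :=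
  (∫⁻ r in Set.Ioi (0 : ℝ),
      (∫⁻ θ in Set.Ico (0 : ℝ) (2 * Real.pi), (‖g r θ‖₊ : ℝ≥0∞) ^ p) *
        ENNReal.ofReal r) ^ (1 / p)

/-- The operator with kernel `χ(b) H`. -/
def TH (δ : ℝ) (a : ℝ → ℂ) (β χ : ℝ → ℝ) (j : ℕ) (f : ℝ → ℝ → ℂ) (r₁ θ₁ : ℝ) : ℂ :=
  ∫ r₂ in Set.Ioi (0 : ℝ),
    (∫ θ₂ in Set.Ico (0 : ℝ) (2 * Real.pi),
      ((χ (bb (θ₁ - θ₂)) : ℝ) : ℂ) * Hker δ a β j r₁ r₂ (θ₁ - θ₂) * f r₂ θ₂) * (r₂ : ℂ)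



lemma exp_norm_one (x : ℝ) : ‖Complex.exp (Complex.I * (x : ℂ))‖ = 1 := by
  rw [Complex.norm_exp]; simp

lemma vdc_bound (lam W : ℝ) (hl : 0 < lam) (w w' : ℝ → ℝ)
    (hw : ∀ s > 0, HasDerivAt w (w' s) s) (hw' : ∀ s > 0, w' s ≤ 0)
    (h0 : ∀ s > 0, 0 ≤ w s) (hW : ∀ s > 0, w s ≤ W) (hIgr : IntegrableOn w (Ioi 0)) :
    ‖∫ s in Ioi (0:ℝ), Complex.exp (Complex.I * ((lam * s ^ 2 : ℝ) : ℂ)) * (w s : ℂ)‖ ≤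
      2 * W / √lam := by
  set e : ℝ → ℂ := fun s => Complex.exp (Complex.I * ((lam * s ^ 2 : ℝ) : ℂ)) with he
  have hnorm : ∀ s, ‖e s‖ = 1 := by
    intro s; exact exp_norm_one _
  have hecont : Continuous e := by simp only [he]; fun_prop
  have hIgr' : IntegrableOn (fun s => e s * (w s : ℂ)) (Ioi 0) := by
    refine Integrable.mono (g := fun s => (w s : ℂ)) hIgr.ofReal ?_ ?_
    · exact hecont.aestronglyMeasurable.mul hIgr.ofReal.aestronglyMeasurable
    · exact Filter.Eventually.of_forall fun s => by rw [norm_mul, hnorm, one_mul]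
  have hsl : 0 < √lam := Real.sqrt_pos.2 hl
  set c : ℝ := 1 / √lam with hc
  have hcpos : 0 < c := by positivity
  have hsplit : ∫ s in Ioi (0:ℝ), e s * (w s : ℂ) =
      (∫ s in Ioc 0 c, e s * (w s : ℂ)) + ∫ s in Ioi c, e s * (w s : ℂ) := by
    rw [← Ioc_union_Ioi_eq_Ioi hcpos.le]
    refine setIntegral_union (Ioc_disjoint_Ioi le_rfl) measurableSet_Ioi
      (hIgr'.mono_set Ioc_subset_Ioi_self) (hIgr'.mono_set (Ioi_subset_Ioi hcpos.le))
  have hfirst : ‖∫ s in Ioc 0 c, e s * (w s : ℂ)‖ ≤ W * c := by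
    have := norm_setIntegral_le_of_norm_le_const (μ := volume) (s := Ioc 0 c) (f := fun s => e s * (w s : ℂ)) (C := W) (by simp) ?_
    · simpa [Measure.real, hcpos.le] using this
    · intro s hs
      rw [norm_mul, hnorm, one_mul, Complex.norm_real, norm_of_nonneg (h0 s hs.1)]
      exact hW s hs.1
  set q : ℝ → ℝ := fun s => w s / s with hq
  set q' : ℝ → ℝ := fun s => (w' s * s - w s * 1) / s ^ 2 with hq'
  have hqd : ∀ s ∈ Ici c, HasDerivAt q (q' s) s := fun s hs =>
    (hw s (hcpos.trans_le hs)).div (hasDerivAt_id s) (hcpos.trans_le hs).ne'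
  have hqneg : ∀ s ∈ Ioi c, q' s ≤ 0 := by
    intro s hs
    have hs0 : 0 < s := hcpos.trans hs
    have := hw' s hs0
    have := h0 s hs0
    refine div_nonpos_of_nonpos_of_nonneg ?_ (by positivity)
    nlinarith
  have hqlim : Filter.Tendsto q Filter.atTop (nhds 0) := by
    refine squeeze_zero' (g := fun s => W / s) ?_ ?_ ?_
    · filter_upwards [Filter.eventually_gt_atTop 0] with s hs
      exact div_nonneg (h0 s hs) hs.le
    · filter_upwards [Filter.eventually_gt_atTop 0] with s hs
      exact div_le_div_of_nonneg_right (hW s hs) hs.le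
    · exact Filter.Tendsto.div_atTop tendsto_const_nhds Filter.tendsto_id
  have hqi := integrableOn_Ioi_deriv_of_nonpos' hqd hqneg hqlim
  have hqI := integral_Ioi_of_hasDerivAt_of_nonpos' hqd hqneg hqlim
  have hed : ∀ s, HasDerivAt e (e s * (2 * Complex.I * lam * s)) s := by
    intro s
    have h1 : HasDerivAt (fun s : ℝ => Complex.I * ((lam * s ^ 2 : ℝ) : ℂ)) (Complex.I * ((lam * (2 * s) : ℝ) : ℂ)) s := by
      have : HasDerivAt (fun s : ℝ => lam * s ^ 2) (lam * (2 * s)) s := by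
        have := (hasDerivAt_pow 2 s).const_mul lam
        simpa using this
      exact this.ofReal_comp.const_mul _
    convert h1.cexp using 1
    simp only [he]; push_cast; ring
  have hlc : (lam : ℂ) ≠ 0 := by exact_mod_cast hl.ne'
  set k : ℂ := (2 * Complex.I * lam)⁻¹ with hk
  have hkn : ‖k‖ = 1 / (2 * lam) := by
    simp [hk, abs_of_pos hl]
  have hparts := integral_Ioi_mul_deriv_eq_deriv_mul (a := c) (u := fun s => (q s : ℂ) * k) (u' := fun s => (q' s : ℂ) * k)
    (v := e) (v' := fun s => e s * (2 * Complex.I * lam * s)) (a' := (q c : ℂ) * k * e c) (b' := 0)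
    (fun s hs => ((hqd s (Ioi_subset_Ici_self hs)).ofReal_comp.mul_const k)) (fun s _ => hed s) ?_ ?_ ?_ ?_
  rotate_left
  · refine (hIgr'.mono_set (Ioi_subset_Ioi hcpos.le)).congr_fun ?_ measurableSet_Ioi
    intro s hs
    have hs0 : (s : ℂ) ≠ 0 := by exact_mod_cast (hcpos.trans hs).ne'
    simp only [Pi.mul_apply, hk, hq]
    push_cast
    field_simp
  · refine Integrable.mono (g := fun s => (q' s : ℂ) * k) (hqi.ofReal.mul_const k) ?_ ?_
    · exact (hqi.ofReal.mul_const k).aestronglyMeasurable.mul hecont.aestronglyMeasurable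
    · exact Filter.Eventually.of_forall fun s => by simp [hnorm]
  · have : ContinuousAt (fun s => (q s : ℂ) * k * e s) c :=
      ((hqd c self_mem_Ici).ofReal_comp.continuousAt.mul_const k).mul hecont.continuousAt
    exact this.tendsto.mono_left nhdsWithin_le_nhds
  · rw [tendsto_zero_iff_norm_tendsto_zero]
    have : Filter.Tendsto (fun s => ‖q s‖ * ‖k‖) Filter.atTop (nhds 0) := by
      have := hqlim.norm.mul_const ‖k‖
      simpa using this
    refine this.congr fun s => ?_
    simp [hnorm]
  have heq : ∫ s in Ioi c, e s * (w s : ℂ) = ∫ s in Ioi c, (q s : ℂ) * k * (e s * (2 * Complex.I * lam * s)) := by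
    refine setIntegral_congr_fun measurableSet_Ioi fun s hs => ?_
    have hs0 : (s : ℂ) ≠ 0 := by exact_mod_cast (hcpos.trans hs).ne'
    simp only [hk, hq]
    push_cast
    field_simp
  have hqc : 0 ≤ q c := div_nonneg (h0 c hcpos) hcpos.le
  have hsec : ‖∫ s in Ioi c, e s * (w s : ℂ)‖ ≤ q c / lam := by
    rw [heq, hparts, zero_sub]
    have h1 : ‖∫ s in Ioi c, (q' s : ℂ) * k * e s‖ ≤ q c * (1 / (2 * lam)) := by
      calc _ ≤ ∫ s in Ioi c, ‖(q' s : ℂ) * k * e s‖ := norm_integral_le_integral_norm _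
        _ = ∫ s in Ioi c, - q' s * (1 / (2 * lam)) := by
          refine setIntegral_congr_fun measurableSet_Ioi fun s hs => ?_
          simp only [norm_mul, hnorm, hkn, Complex.norm_real, mul_one]
          rw [norm_of_nonpos (hqneg s hs)]
        _ = q c * (1 / (2 * lam)) := by
          rw [integral_mul_const, integral_neg, hqI]; ring
    calc _ ≤ ‖-((q c : ℂ) * k * e c)‖ + ‖∫ s in Ioi c, (q' s : ℂ) * k * e s‖ := norm_sub_le _ _
      _ ≤ q c * (1 / (2 * lam)) + q c * (1 / (2 * lam)) := by
        gcongr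
        rw [norm_neg, norm_mul, norm_mul, hnorm, hkn, Complex.norm_real, norm_of_nonneg hqc, mul_one]
      _ = q c / lam := by field_simp; ring
  have hqc2 : q c / lam ≤ W / √lam := by
    have h1 : q c = w c * √lam := by simp only [hq, hc]; field_simp
    have h2 : √lam * √lam = lam := Real.mul_self_sqrt hl.le
    rw [h1, div_le_div_iff₀ hl hsl, mul_assoc, h2]
    exact mul_le_mul_of_nonneg_right (hW c hcpos) hl.le
  rw [hsplit]
  calc _ ≤ _ := norm_add_le _ _
    _ ≤ W * c + W / √lam := add_le_add hfirst (hsec.trans hqc2)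
    _ = _ := by rw [hc]; ring

def Pker (φ s : ℝ) : ℝ :=
  Real.sin (φ + Real.pi) / (s ^ 2 / 2 + 2 * Real.sin ((φ + Real.pi) / 2) ^ 2)

def Jint (lam φ : ℝ) : ℂ :=
  ∫ s in Set.Ioi (0 : ℝ), Complex.exp (Complex.I * ((lam * s ^ 2 : ℝ) : ℂ)) * ((Pker φ s : ℝ) : ℂ)

lemma cauchy_int (d : ℝ) (hd : 0 < d) :
    Integrable (fun s : ℝ => 1 / (s ^ 2 / 2 + 2 * d ^ 2)) ∧
    ∫ s in Ioi (0:ℝ), 1 / (s ^ 2 / 2 + 2 * d ^ 2) = π / (2 * d) := by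
  have h1 : (fun s : ℝ => 1 / (s ^ 2 / 2 + 2 * d ^ 2)) =
      fun s : ℝ => (1 / (2 * d ^ 2)) * (1 + ((2 * d)⁻¹ * s) ^ 2)⁻¹ := by
    ext s
    have : 0 < s ^ 2 / 2 + 2 * d ^ 2 := by positivity
    have : 0 < (1 + ((2 * d)⁻¹ * s) ^ 2) := by positivity
    field_simp
    ring
  have hi : 0 < (2 * d)⁻¹ := by positivity
  rw [h1]
  refine ⟨(integrable_inv_one_add_sq.comp_mul_left' hi.ne').const_mul _, ?_⟩
  rw [integral_const_mul, integral_comp_mul_left_Ioi (fun x : ℝ => (1 + x ^ 2)⁻¹) 0 hi]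
  simp only [mul_zero, integral_Ioi_inv_one_add_sq, arctan_zero, sub_zero, smul_eq_mul, inv_inv]
  field_simp

lemma Pker_eq (φ s : ℝ) (_h : Real.sin ((φ + π) / 2) ≠ 0) : Pker φ s =
    Real.sin (φ + π) * (1 / (s ^ 2 / 2 + 2 * |Real.sin ((φ + π) / 2)| ^ 2)) := by
  rw [Pker, sq_abs]; ring

lemma Pker_zero (φ s : ℝ) (h : Real.sin ((φ + π) / 2) = 0) : Pker φ s = 0 := by
  have : Real.sin (φ + π) = 0 := by
    rw [show φ + π = 2 * ((φ + π) / 2) by ring, Real.sin_two_mul, h]; ring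
  rw [Pker, this, zero_div]

lemma Pker_integrable (φ : ℝ) : Integrable (fun s => Pker φ s) := by
  by_cases h : Real.sin ((φ + π) / 2) = 0
  · simp only [Pker_zero φ _ h]; exact integrable_zero _ _ _
  · simp only [Pker_eq φ _ h]
    exact (cauchy_int _ (abs_pos.2 h)).1.const_mul _

lemma Pker_int_abs (φ : ℝ) : ∫ s in Ioi (0:ℝ), |Pker φ s| ≤ π := by
  by_cases h : Real.sin ((φ + π) / 2) = 0
  · simp only [Pker_zero φ _ h]; simp [pi_pos.le]
  · have hp := abs_pos.2 h
    have h1 : ∀ s, |Pker φ s| = |Real.sin (φ + π)| * (1 / (s ^ 2 / 2 + 2 * |Real.sin ((φ + π) / 2)| ^ 2)) := by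
      intro s
      rw [Pker_eq φ s h, abs_mul]
      congr 1
      exact abs_of_nonneg (by positivity)
    simp only [h1]
    rw [integral_const_mul, (cauchy_int _ hp).2]
    have h2 : |Real.sin (φ + π)| = 2 * |Real.sin ((φ + π) / 2)| * |Real.cos ((φ + π) / 2)| := by
      conv_lhs => rw [show φ + π = 2 * ((φ + π) / 2) by ring, Real.sin_two_mul]
      rw [abs_mul, abs_mul]; norm_num
    rw [h2]
    have h3 : 2 * |Real.sin ((φ + π) / 2)| * |Real.cos ((φ + π) / 2)| * (π / (2 * |Real.sin ((φ + π) / 2)|)) =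
      |Real.cos ((φ + π) / 2)| * π := by field_simp
    rw [h3]
    have := Real.abs_cos_le_one ((φ + π) / 2)
    nlinarith [pi_pos]

lemma Jint_bound (lam φ : ℝ) : ‖Jint lam φ‖ ≤ π := by
  refine (norm_integral_le_integral_norm _).trans ?_
  refine le_trans (le_of_eq ?_) (Pker_int_abs φ)
  congr 1; ext s
  rw [norm_mul, exp_norm_one, one_mul, Complex.norm_real, Real.norm_eq_abs]

lemma Jint_decay (lam φ : ℝ) (hl : 0 < lam) (h : Real.sin ((φ + π) / 2) ≠ 0) :
    ‖Jint lam φ‖ ≤ 1 / Real.sin ((φ + π) / 2) ^ 2 / √lam := by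
  have hp := abs_pos.2 h
  set d := |Real.sin ((φ + π) / 2)| with hd
  have h1 : Jint lam φ = (Real.sin (φ + π) : ℂ) * ∫ s in Ioi (0:ℝ),
      Complex.exp (Complex.I * ((lam * s ^ 2 : ℝ) : ℂ)) * ((1 / (s ^ 2 / 2 + 2 * d ^ 2) : ℝ) : ℂ) := by
    rw [Jint, ← integral_const_mul]
    congr 1; ext s
    rw [Pker_eq φ s h]; push_cast; ring
  have h2 := vdc_bound lam (1 / (2 * d ^ 2)) hl (fun s => 1 / (s ^ 2 / 2 + 2 * d ^ 2))
    (fun s => - s / (s ^ 2 / 2 + 2 * d ^ 2) ^ 2) ?_ ?_ ?_ ?_ (cauchy_int d hp).1.integrableOn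
  · rw [h1, norm_mul]
    have h3 : ‖(Real.sin (φ + π) : ℂ)‖ ≤ 1 := by
      rw [Complex.norm_real]; exact Real.abs_sin_le_one _
    calc _ ≤ 1 * (2 * (1 / (2 * d ^ 2)) / √lam) := by gcongr
      _ = _ := by rw [hd, sq_abs]; field_simp
  · intro s hs
    have hne : s ^ 2 / 2 + 2 * d ^ 2 ≠ 0 := by positivity
    have h4 : HasDerivAt (fun s : ℝ => s ^ 2 / 2 + 2 * d ^ 2) s s := by
      have := ((hasDerivAt_pow 2 s).div_const 2).add_const (2 * d ^ 2)
      refine HasDerivAt.congr_deriv this ?_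
      norm_num
    have := h4.inv hne
    simp only [one_div]
    exact this
  · intro s hs
    exact div_nonpos_of_nonpos_of_nonneg (by linarith) (by positivity)
  · intro s hs; positivity
  · intro s hs
    gcongr
    nlinarith [sq_nonneg s]

lemma Jint_measurable (lam : ℝ) : Measurable (Jint lam) := by
  have : StronglyMeasurable (Function.uncurry fun (φ s : ℝ) =>
      Complex.exp (Complex.I * ((lam * s ^ 2 : ℝ) : ℂ)) * ((Pker φ s : ℝ) : ℂ)) := by
    apply Measurable.stronglyMeasurable
    simp only [Pker]
    fun_prop
  exact (this.integral_prod_right (ν := volume.restrict (Ioi 0))).measurable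

lemma Pker_periodic (s : ℝ) : Function.Periodic (fun φ => Pker φ s) (2 * π) := by
  intro φ
  simp only [Pker]
  rw [show φ + 2 * π + π = (φ + π) + 2 * π by ring, Real.sin_add_two_pi (φ + π),
    show (φ + π + 2 * π) / 2 = (φ + π) / 2 + π by ring, Real.sin_add_pi ((φ + π) / 2), neg_sq]

lemma Jint_periodic (lam : ℝ) : Function.Periodic (Jint lam) (2 * π) := by
  intro φ
  simp only [Jint]
  congr 1; ext s
  have := Pker_periodic s φ
  simp only at this
  rw [this]

lemma Jint_continuousAt (lam φ : ℝ) (h : Real.sin ((φ + π) / 2) ≠ 0) :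
    ContinuousAt (Jint lam) φ := by
  set d := |Real.sin ((φ + π) / 2)| / 2 with hd
  have hdp : 0 < d := by have := abs_pos.2 h; positivity
  have hev : ∀ᶠ x in nhds φ, d < |Real.sin ((x + π) / 2)| := by
    have : ContinuousAt (fun x : ℝ => |Real.sin ((x + π) / 2)|) φ := by fun_prop
    refine this.eventually_const_lt ?_
    have := abs_pos.2 h
    rw [hd]; linarith
  refine continuousAt_of_dominated (bound := fun s => 1 / (s ^ 2 / 2 + 2 * d ^ 2)) ?_ ?_
    (cauchy_int d hdp).1.integrableOn ?_
  · refine Filter.Eventually.of_forall fun x => Measurable.aestronglyMeasurable ?_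
    simp only [Pker]; fun_prop
  · filter_upwards [hev] with x hx
    refine Filter.Eventually.of_forall fun s => ?_
    rw [norm_mul, exp_norm_one, one_mul, Complex.norm_real, Real.norm_eq_abs, Pker, abs_div]
    have h1 : d ^ 2 ≤ Real.sin ((x + π) / 2) ^ 2 := by
      rw [← sq_abs (Real.sin _)]; gcongr
    rw [abs_of_nonneg (a := s ^ 2 / 2 + 2 * Real.sin ((x + π) / 2) ^ 2) (by positivity)]
    gcongr
    exact Real.abs_sin_le_one _
  · refine Filter.Eventually.of_forall fun s => ?_
    have : s ^ 2 / 2 + 2 * Real.sin ((φ + π) / 2) ^ 2 ≠ 0 := by positivity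
    have : ContinuousAt (fun x => Pker x s) φ := by
      simp only [Pker]
      refine ContinuousAt.div (by fun_prop) (by fun_prop) this
    refine continuousAt_const.mul ?_
    exact Complex.continuous_ofReal.continuousAt.comp this

/-- Fourier coefficients of the Cauchy kernel on the circle. -/
lemma cauchy_fourier (r : ℝ) (hr : |r| < 1) (m : ℤ) :
    ∫ x in (0:ℝ)..(2 * π), Complex.exp (-(m * x * Complex.I)) *
      (1 - r * Complex.exp (x * Complex.I))⁻¹ =
      if 0 ≤ m then 2 * π * (r : ℂ) ^ m.toNat else 0 := by
  have hz : ∀ x : ℝ, ‖(r : ℂ) * Complex.exp (x * Complex.I)‖ = |r| := by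
    intro x; rw [norm_mul, Complex.norm_exp_ofReal_mul_I, mul_one, Complex.norm_real, Real.norm_eq_abs]
  have hone : ∀ x : ℝ, ‖Complex.exp (-(m * x * Complex.I))‖ = 1 := by
    intro x; rw [Complex.norm_exp]; simp
  have hgeo : ∀ x : ℝ, HasSum (fun n : ℕ => Complex.exp (-(m * x * Complex.I)) *
      ((r : ℂ) * Complex.exp (x * Complex.I)) ^ n)
      (Complex.exp (-(m * x * Complex.I)) * (1 - r * Complex.exp (x * Complex.I))⁻¹) := by
    intro x
    have hlt : ‖(r : ℂ) * Complex.exp (x * Complex.I)‖ < 1 := by rw [hz]; exact hr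
    exact (hasSum_geometric_of_norm_lt_one hlt).mul_left _
  have h1 := intervalIntegral.hasSum_integral_of_dominated_convergence (μ := volume) (a := 0) (b := 2 * π)
    (F := fun (n : ℕ) (x : ℝ) => Complex.exp (-(m * x * Complex.I)) * ((r : ℂ) * Complex.exp (x * Complex.I)) ^ n)
    (f := fun x : ℝ => Complex.exp (-(m * x * Complex.I)) * (1 - r * Complex.exp (x * Complex.I))⁻¹)
    (fun n _ => |r| ^ n) (fun n => Continuous.aestronglyMeasurable (by fun_prop))
    (fun n => Filter.Eventually.of_forall fun x _ => by
      rw [norm_mul, hone, one_mul, norm_pow, hz])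
    (Filter.Eventually.of_forall fun x _ => summable_geometric_of_lt_one (abs_nonneg r) hr)
    (by simp) (Filter.Eventually.of_forall fun x _ => hgeo x)
  have h2 : ∀ n : ℕ, (∫ x in (0:ℝ)..(2 * π), Complex.exp (-(m * x * Complex.I)) *
      ((r : ℂ) * Complex.exp (x * Complex.I)) ^ n) = if (n : ℤ) = m then 2 * π * (r : ℂ) ^ n else 0 := by
    intro n
    have h3 : ∀ x : ℝ, Complex.exp (-(m * x * Complex.I)) * ((r : ℂ) * Complex.exp (x * Complex.I)) ^ n =
        (r : ℂ) ^ n * Complex.exp ((((n : ℤ) - m : ℤ) : ℂ) * Complex.I * x) := by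
      intro x
      rw [mul_pow, ← Complex.exp_nat_mul, mul_left_comm, ← Complex.exp_add]
      congr 2; push_cast; ring
    simp_rw [h3]
    rw [intervalIntegral.integral_const_mul]
    by_cases hnm : (n : ℤ) = m
    · rw [if_pos hnm, hnm]; simp; ring
    · rw [if_neg hnm]
      have hc : (((n : ℤ) - m : ℤ) : ℂ) * Complex.I ≠ 0 :=
        mul_ne_zero (by exact_mod_cast sub_ne_zero.2 hnm) Complex.I_ne_zero
      rw [integral_exp_mul_complex hc]
      have : Complex.exp ((((n : ℤ) - m : ℤ) : ℂ) * Complex.I * ((2 * π : ℝ) : ℂ)) = 1 := by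
        rw [Complex.exp_eq_one_iff]
        refine ⟨(n : ℤ) - m, ?_⟩
        push_cast; ring
      rw [this]; simp
  simp_rw [h2] at h1
  refine h1.unique ?_
  split_ifs with hm
  · have he : (fun n : ℕ => if (n : ℤ) = m then 2 * (π : ℂ) * (r : ℂ) ^ n else 0) =
        fun n : ℕ => if n = m.toNat then 2 * (π : ℂ) * (r : ℂ) ^ m.toNat else 0 := by
      funext n
      by_cases hn : n = m.toNat
      · rw [if_pos hn, if_pos (by omega), hn]
      · rw [if_neg hn, if_neg (by omega)]
    rw [he]
    exact hasSum_ite_eq (m.toNat) (2 * (π : ℂ) * (r : ℂ) ^ m.toNat)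
  · convert hasSum_zero using 2 with n
    rw [if_neg (by omega)]

def rhoh (s : ℝ) : ℝ := √(1 + s ^ 2 / 4) - s / 2

lemma rhoh_inv (s : ℝ) : rhoh s * (√(1 + s ^ 2 / 4) + s / 2) = 1 := by
  have := Real.sq_sqrt (show 0 ≤ 1 + s ^ 2 / 4 by positivity)
  rw [rhoh]; nlinarith

lemma rhoh_pos (s : ℝ) (hs : 0 ≤ s) : 0 < rhoh s := by
  by_contra h
  have := rhoh_inv s
  have : 0 ≤ (√(1 + s ^ 2 / 4) + s / 2) := by positivity
  nlinarith

lemma rhoh_le (s : ℝ) (hs : 0 ≤ s) : rhoh s ^ 2 ≤ 1 / (1 + s ^ 2 / 4) := by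
  have h1 := rhoh_inv s
  have h2 := Real.sq_sqrt (show 0 ≤ 1 + s ^ 2 / 4 by positivity)
  have h3 : 0 ≤ √(1 + s ^ 2 / 4) := Real.sqrt_nonneg _
  have h4 : 1 + s ^ 2 / 4 ≤ (√(1 + s ^ 2 / 4) + s / 2) ^ 2 := by nlinarith
  rw [le_div_iff₀ (by positivity)]
  calc _ ≤ rhoh s ^ 2 * (√(1 + s ^ 2 / 4) + s / 2) ^ 2 := by gcongr
    _ = 1 := by rw [← mul_pow, h1, one_pow]

lemma rhoh_lt (s : ℝ) (hs : 0 < s) : rhoh s ^ 2 < 1 := by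
  refine (rhoh_le s hs.le).trans_lt ?_
  rw [div_lt_one (by positivity)]
  have : 0 < s ^ 2 := by positivity
  linarith

lemma rhoh_deriv (s : ℝ) : HasDerivAt rhoh (s / (4 * √(1 + s ^ 2 / 4)) - 1 / 2) s := by
  have h0 : 1 + s ^ 2 / 4 ≠ 0 := by positivity
  have h1 : HasDerivAt (fun s : ℝ => 1 + s ^ 2 / 4) (s / 2) s := by
    have := ((hasDerivAt_pow 2 s).div_const 4).const_add 1
    refine HasDerivAt.congr_deriv this ?_
    norm_num; ring
  have h2 := (h1.sqrt h0).sub ((hasDerivAt_id s).div_const 2)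
  refine HasDerivAt.congr_deriv h2 ?_
  have : √(1 + s ^ 2 / 4) ≠ 0 := by positivity
  field_simp
  ring

lemma Pker_rho (φ s : ℝ) (hs : 0 < s) :
    ((Pker φ s : ℝ) : ℂ) = -Complex.I * ((1 - ((-(rhoh s ^ 2) : ℝ) : ℂ) * Complex.exp (φ * Complex.I))⁻¹ -
      (1 - ((-(rhoh s ^ 2) : ℝ) : ℂ) * Complex.exp (-(φ * Complex.I)))⁻¹) := by
  set r : ℝ := rhoh s ^ 2 with hr
  have hr0 : 0 < r := by have := rhoh_pos s hs.le; positivity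
  have hr1 : r < 1 := rhoh_lt s hs
  have hA : r ^ 2 + 1 = r * (2 + s ^ 2) := by
    have h1 := rhoh_inv s
    have h2 := Real.sq_sqrt (show 0 ≤ 1 + s ^ 2 / 4 by positivity)
    set y := √(1 + s ^ 2 / 4)
    have h3 : rhoh s = y - s / 2 := rfl
    rw [hr, h3]
    have h4 : y ^ 2 = 1 + s ^ 2 / 4 := h2
    have h5 : (y - s / 2) ^ 2 * (y + s / 2) ^ 2 = 1 := by
      rw [← mul_pow, ← h3, h1, one_pow]
    calc ((y - s / 2) ^ 2) ^ 2 + 1 = ((y - s / 2) ^ 2) ^ 2 + (y - s / 2) ^ 2 * (y + s / 2) ^ 2 := by rw [h5]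
      _ = (y - s / 2) ^ 2 * (2 * y ^ 2 + s ^ 2 / 2) := by ring
      _ = _ := by rw [h4]; ring
  have hnz : ∀ w : ℂ, ‖w‖ = 1 → 1 - ((-r : ℝ) : ℂ) * w ≠ 0 := by
    intro w hw h
    have : ((-r : ℝ) : ℂ) * w = 1 := (sub_eq_zero.1 h).symm
    have h2 := congrArg norm this
    rw [norm_mul, hw, Complex.norm_real, mul_one, norm_one, Real.norm_eq_abs, abs_neg, abs_of_pos hr0] at h2
    linarith
  have n1 := hnz (Complex.exp (φ * Complex.I)) (Complex.norm_exp_ofReal_mul_I φ)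
  have n2 := hnz (Complex.exp (-(φ * Complex.I))) (by
    have := Complex.norm_exp_ofReal_mul_I (-φ)
    rw [← this]; congr 2; push_cast; ring)
  have hP : Pker φ s = -(2 * r * Real.sin φ) / (1 + 2 * r * Real.cos φ + r ^ 2) := by
    have hs2 : 2 * Real.sin ((φ + π) / 2) ^ 2 = 1 + Real.cos φ := by
      have := Real.cos_sq' ((φ + π) / 2)
      have h2 := Real.cos_two_mul ((φ + π) / 2)
      rw [show 2 * ((φ + π) / 2) = φ + π by ring, Real.cos_add_pi] at h2
      linarith
    rw [Pker, hs2, Real.sin_add_pi]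
    have d1 : 0 < s ^ 2 / 2 + (1 + Real.cos φ) := by
      have := Real.neg_one_le_cos φ
      have : 0 < s ^ 2 := by positivity
      linarith
    have d2 : 1 + 2 * r * Real.cos φ + r ^ 2 = 2 * r * (s ^ 2 / 2 + (1 + Real.cos φ)) := by linarith
    rw [d2]
    field_simp
  have hsin : Complex.sin φ = (Complex.exp (-(φ * Complex.I)) - Complex.exp (φ * Complex.I)) * Complex.I / 2 := by
    rw [Complex.sin, neg_mul]
  have hcos : Complex.cos φ = (Complex.exp (φ * Complex.I) + Complex.exp (-(φ * Complex.I))) / 2 := by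
    rw [Complex.cos, neg_mul]
  have hmul : Complex.exp (φ * Complex.I) * Complex.exp (-(φ * Complex.I)) = 1 := by
    rw [← Complex.exp_add]; simp
  rw [hP]
  push_cast at n1 n2 ⊢
  rw [hsin, hcos]
  set z := Complex.exp (φ * Complex.I)
  set z' := Complex.exp (-(φ * Complex.I))
  have hden : 1 + 2 * (r : ℂ) * ((z + z') / 2) + (r : ℂ) ^ 2 = (1 - -(r : ℂ) * z) * (1 - -(r : ℂ) * z') := by
    linear_combination (-(r : ℂ) ^ 2) * hmul
  rw [hden, inv_sub_inv n1 n2, mul_div_assoc']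
  congr 1
  ring


lemma cauchy_fourier' (r : ℝ) (hr : |r| < 1) (m : ℤ) :
    ∫ x in (0:ℝ)..(2 * π), Complex.exp (-(m * x * Complex.I)) *
      (1 - r * Complex.exp (-(x * Complex.I)))⁻¹ =
      if 0 ≤ -m then 2 * π * (r : ℂ) ^ (-m).toNat else 0 := by
  rw [← cauchy_fourier r hr (-m)]
  have h := intervalIntegral.integral_comp_sub_left (a := 0) (b := 2 * π) (fun x : ℝ => Complex.exp (-(m * x * Complex.I)) *
      (1 - r * Complex.exp (-(x * Complex.I)))⁻¹) (2 * π)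
  rw [sub_self, sub_zero] at h
  rw [← h]
  refine intervalIntegral.integral_congr fun x _ => ?_
  congr 1
  · rw [Complex.exp_eq_exp_iff_exists_int]
    refine ⟨-m, ?_⟩
    push_cast; ring
  · congr 3
    rw [Complex.exp_eq_exp_iff_exists_int]
    refine ⟨-1, ?_⟩
    push_cast; ring

lemma cauchy_cont (r : ℝ) (hr : |r| < 1) (m : ℤ) (σ : ℝ) :
    IntervalIntegrable (fun x : ℝ => Complex.exp (-(m * x * Complex.I)) *
      (1 - r * Complex.exp (σ * (x * Complex.I)))⁻¹) volume 0 (2 * π) := by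
  apply Continuous.intervalIntegrable
  refine Continuous.mul (by fun_prop) (Continuous.inv₀ (by fun_prop) ?_)
  intro x h
  have : (r : ℂ) * Complex.exp (σ * (x * Complex.I)) = 1 := (sub_eq_zero.1 h).symm
  have h2 := congrArg norm this
  rw [norm_mul, show (σ : ℂ) * (x * Complex.I) = ((σ * x : ℝ) : ℂ) * Complex.I by push_cast; ring,
    Complex.norm_exp_ofReal_mul_I, Complex.norm_real, mul_one, norm_one, Real.norm_eq_abs] at h2
  linarith

lemma Pker_fourier (m : ℤ) : ∃ κ : ℂ, ‖κ‖ ≤ 2 * π ∧ (m = 0 → κ = 0) ∧ ∀ s : ℝ, 0 < s →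
    ∫ x in (0:ℝ)..(2 * π), Complex.exp (-(m * x * Complex.I)) * ((Pker x s : ℝ) : ℂ) =
      κ * (((rhoh s ^ 2) ^ m.natAbs : ℝ) : ℂ) := by
  have hIgr : ∀ s : ℝ, 0 < s →
    ∫ x in (0:ℝ)..(2 * π), Complex.exp (-(m * x * Complex.I)) * ((Pker x s : ℝ) : ℂ) =
      -Complex.I * ((if 0 ≤ m then 2 * π * ((-(rhoh s ^ 2) : ℝ) : ℂ) ^ m.toNat else 0) -
        (if 0 ≤ -m then 2 * π * ((-(rhoh s ^ 2) : ℝ) : ℂ) ^ (-m).toNat else 0)) := by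
    intro s hs
    have hr : |-(rhoh s ^ 2)| < 1 := by
      rw [abs_neg, abs_of_nonneg (by positivity)]; exact rhoh_lt s hs
    rw [← cauchy_fourier _ hr m, ← cauchy_fourier' _ hr m, ← intervalIntegral.integral_sub,
      ← intervalIntegral.integral_const_mul]
    · refine intervalIntegral.integral_congr fun x _ => ?_
      rw [Pker_rho x s hs]
      ring
    · simpa using cauchy_cont _ hr m 1
    · simpa using cauchy_cont _ hr m (-1)
  rcases lt_trichotomy m 0 with hm | hm | hm
  · refine ⟨Complex.I * (2 * π) * (-1) ^ m.natAbs, by simp [abs_of_pos pi_pos], fun h => absurd h hm.ne, ?_⟩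
    intro s hs
    rw [hIgr s hs, if_neg (by omega), if_pos (by omega), show (-m).toNat = m.natAbs by omega]
    push_cast
    rw [neg_pow]
    ring
  · refine ⟨0, by simp [pi_pos.le], fun _ => rfl, ?_⟩
    intro s hs
    rw [hIgr s hs, hm]; simp
  · refine ⟨-Complex.I * (2 * π) * (-1) ^ m.natAbs, by simp [abs_of_pos pi_pos], fun h => absurd h hm.ne', ?_⟩
    intro s hs
    rw [hIgr s hs, if_pos (by omega), if_neg (by omega), show m.toNat = m.natAbs by omega]
    push_cast
    rw [neg_pow]
    ring

lemma rhoh_vdc (lam : ℝ) (hl : 0 < lam) (n : ℕ) (hn : n ≠ 0) :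
    ‖∫ s in Ioi (0:ℝ), Complex.exp (Complex.I * ((lam * s ^ 2 : ℝ) : ℂ)) *
      (((rhoh s ^ 2) ^ n : ℝ) : ℂ)‖ ≤ 2 / √lam := by
  have h := vdc_bound lam 1 hl (fun s => (rhoh s ^ 2) ^ n)
    (fun s => n * (rhoh s ^ 2) ^ (n - 1) * (2 * rhoh s * (s / (4 * √(1 + s ^ 2 / 4)) - 1 / 2))) ?_ ?_ ?_ ?_ ?_
  · simpa using h
  · intro s hs
    have := ((rhoh_deriv s).pow 2).pow n
    refine HasDerivAt.congr_deriv this ?_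
    simp
  · intro s hs
    have h1 := rhoh_pos s (le_of_lt hs)
    have h2 : s / (4 * √(1 + s ^ 2 / 4)) - 1 / 2 ≤ 0 := by
      have h3 : 0 < √(1 + s ^ 2 / 4) := by positivity
      have h4 : s / 2 ≤ √(1 + s ^ 2 / 4) := by rw [rhoh] at h1; linarith
      rw [sub_nonpos, div_le_div_iff₀ (by positivity) (by norm_num)]
      linarith
    refine mul_nonpos_of_nonneg_of_nonpos (by positivity) (mul_nonpos_of_nonneg_of_nonpos (by positivity) h2)
  · intro s hs; positivity
  · intro s hs; exact pow_le_one₀ (by positivity) (rhoh_lt s hs).le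
  · have hI : Integrable (fun s : ℝ => 1 / (1 + s ^ 2 / 4)) := by
      have := (cauchy_int (1/2) (by norm_num)).1
      have h2 := (integrable_inv_one_add_sq.comp_mul_left' (show (2:ℝ)⁻¹ ≠ 0 by norm_num))
      refine h2.congr (Filter.Eventually.of_forall fun s => ?_)
      simp only [one_div]; congr 2; ring
    refine Integrable.mono hI.integrableOn ?_ ?_
    · apply Continuous.aestronglyMeasurable
      have : Continuous rhoh := by
        rw [continuous_iff_continuousAt]; exact fun s => (rhoh_deriv s).continuousAt
      fun_prop
    · filter_upwards [ae_restrict_mem measurableSet_Ioi] with s hs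
      rw [Real.norm_of_nonneg (by positivity), Real.norm_of_nonneg (by positivity)]
      refine le_trans ?_ (rhoh_le s (le_of_lt hs))
      exact pow_le_of_le_one (by positivity) (rhoh_lt s hs).le hn

lemma Jint_fourier (lam : ℝ) (hl : 0 < lam) (m : ℤ) :
    ‖∫ x in (0:ℝ)..(2 * π), Complex.exp (-(m * x * Complex.I)) * Jint lam x‖ ≤ 4 * π / √lam := by
  have h2π : (0:ℝ) < 2 * π := by positivity
  obtain ⟨κ, hκ, hκ0, hP⟩ := Pker_fourier m
  have hone : ∀ x : ℝ, ‖Complex.exp (-(m * x * Complex.I))‖ = 1 := by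
    intro x; rw [Complex.norm_exp]; simp
  have hmeas : Measurable (Function.uncurry fun (x s : ℝ) => Complex.exp (-(m * x * Complex.I)) *
      (Complex.exp (Complex.I * ((lam * s ^ 2 : ℝ) : ℂ)) * ((Pker x s : ℝ) : ℂ))) := by
    simp only [Function.uncurry_def, Pker]
    fun_prop
  have hn : ∀ x s : ℝ, ‖Complex.exp (-(m * x * Complex.I)) *
      (Complex.exp (Complex.I * ((lam * s ^ 2 : ℝ) : ℂ)) * ((Pker x s : ℝ) : ℂ))‖ = |Pker x s| := by
    intro x s
    rw [norm_mul, hone, norm_mul, exp_norm_one, one_mul, one_mul, Complex.norm_real, Real.norm_eq_abs]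
  have hIgr : Integrable (Function.uncurry fun (x s : ℝ) => Complex.exp (-(m * x * Complex.I)) *
      (Complex.exp (Complex.I * ((lam * s ^ 2 : ℝ) : ℂ)) * ((Pker x s : ℝ) : ℂ)))
      ((volume.restrict (Ioc 0 (2 * π))).prod (volume.restrict (Ioi 0))) := by
    rw [integrable_prod_iff hmeas.aestronglyMeasurable]
    constructor
    · refine Filter.Eventually.of_forall fun x => ?_
      refine Integrable.mono (Pker_integrable x).integrableOn ?_ ?_
      · exact (hmeas.comp measurable_prodMk_left).aestronglyMeasurable
      · refine Filter.Eventually.of_forall fun s => ?_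
        simp only [Function.uncurry]
        rw [hn, Real.norm_eq_abs]
    · refine Integrable.mono (g := fun _ => π) (integrable_const _) ?_ ?_
      · exact hmeas.aestronglyMeasurable.norm.integral_prod_right'
      · refine Filter.Eventually.of_forall fun x => ?_
        simp only [Function.uncurry, hn]
        rw [Real.norm_of_nonneg (integral_nonneg fun s => abs_nonneg _), Real.norm_of_nonneg pi_pos.le]
        exact Pker_int_abs x
  have heq : ∫ x in (0:ℝ)..(2 * π), Complex.exp (-(m * x * Complex.I)) * Jint lam x =
      κ * ∫ s in Ioi (0:ℝ), Complex.exp (Complex.I * ((lam * s ^ 2 : ℝ) : ℂ)) *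
      (((rhoh s ^ 2) ^ m.natAbs : ℝ) : ℂ) := by
    rw [intervalIntegral.integral_of_le h2π.le]
    calc _ = ∫ x in Ioc 0 (2 * π), ∫ s in Ioi (0:ℝ), Complex.exp (-(m * x * Complex.I)) *
      (Complex.exp (Complex.I * ((lam * s ^ 2 : ℝ) : ℂ)) * ((Pker x s : ℝ) : ℂ)) := by
          congr 1; ext x; rw [integral_const_mul, Jint]
      _ = ∫ s in Ioi (0:ℝ), ∫ x in Ioc 0 (2 * π), Complex.exp (-(m * x * Complex.I)) *
      (Complex.exp (Complex.I * ((lam * s ^ 2 : ℝ) : ℂ)) * ((Pker x s : ℝ) : ℂ)) := integral_integral_swap hIgr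
      _ = _ := by
        rw [← integral_const_mul]
        refine setIntegral_congr_fun measurableSet_Ioi fun s hs => ?_
        have := hP s hs
        rw [intervalIntegral.integral_of_le h2π.le] at this
        rw [mul_left_comm, ← this, ← integral_const_mul]
        congr 1; ext x; ring
  rw [heq]
  by_cases hm : m = 0
  · rw [hκ0 hm, zero_mul, norm_zero]; positivity
  · rw [norm_mul]
    calc _ ≤ (2 * π) * (2 / √lam) := by
          gcongr
          exact rhoh_vdc lam hl _ (by omega)
      _ = _ := by ring


lemma multiplier_bound (K v : ℝ → ℂ) (B M : ℝ) (hK : Measurable K) (hB : ∀ x, ‖K x‖ ≤ B)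
    (hper : Function.Periodic K (2 * π))
    (hM : ∀ m : ℤ, ‖∫ x in (0:ℝ)..(2 * π), Complex.exp (-(m * x * Complex.I)) * K x‖ ≤ M)
    (hv : MemLp v 2 (volume.restrict (Ioc 0 (2 * π))))
    (hcont : Continuous fun θ : ℝ => ∫ t in (0:ℝ)..(2 * π), K (θ - t) * v t) :
    ∫ θ in (0:ℝ)..(2 * π), ‖∫ t in (0:ℝ)..(2 * π), K (θ - t) * v t‖ ^ 2 ≤
      M ^ 2 * ∫ t in (0:ℝ)..(2 * π), ‖v t‖ ^ 2 := by
  have h2π : (0:ℝ) < 2 * π := by positivity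
  set u : ℝ → ℂ := fun θ : ℝ => ∫ t in (0:ℝ)..(2 * π), K (θ - t) * v t with hu
  have hv1 : Integrable v (volume.restrict (Ioc 0 (2 * π))) :=
    hv.integrable (by norm_num)
  have hu2 : MemLp u 2 (volume.restrict (Ioc 0 (2 * π))) := by
    have : ContinuousOn u (Icc 0 (2 * π)) := hcont.continuousOn
    obtain ⟨C, hC⟩ := isCompact_Icc.exists_bound_of_continuousOn this
    refine MemLp.of_bound hcont.aestronglyMeasurable C ?_
    filter_upwards [ae_restrict_mem measurableSet_Ioc] with x hx
    exact hC x ⟨hx.1.le, hx.2⟩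
  have key : ∀ m : ℤ, ∀ f : ℝ → ℂ, fourierCoeffOn h2π f m =
      (1 / (2 * π)) • ∫ x in (0:ℝ)..(2 * π), Complex.exp (-(m * x * Complex.I)) * f x := by
    intro m f
    rw [fourierCoeffOn_eq_integral]
    simp only [sub_zero, smul_eq_mul]
    congr 1
    refine intervalIntegral.integral_congr fun x _ => ?_
    rw [fourier_coe_apply]
    congr 2
    push_cast
    have : (π : ℂ) ≠ 0 := by exact_mod_cast pi_ne_zero
    field_simp
    ring
  have conv : ∀ m : ℤ, (∫ x in (0:ℝ)..(2 * π), Complex.exp (-(m * x * Complex.I)) * u x) =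
      (∫ x in (0:ℝ)..(2 * π), Complex.exp (-(m * x * Complex.I)) * K x) *
      (∫ x in (0:ℝ)..(2 * π), Complex.exp (-(m * x * Complex.I)) * v x) := by
    intro m
    have hIgr : Integrable (Function.uncurry fun (x t : ℝ) => Complex.exp (-(m * x * Complex.I)) * (K (x - t) * v t))
        ((volume.restrict (Ioc 0 (2 * π))).prod (volume.restrict (Ioc 0 (2 * π)))) := by
      have h1 : Integrable (fun p : ℝ × ℝ => (B:ℂ) * v p.2)
          ((volume.restrict (Ioc 0 (2 * π))).prod (volume.restrict (Ioc 0 (2 * π)))) :=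
        (hv1.comp_snd _).const_mul _
      refine h1.mono ?_ ?_
      · refine AEStronglyMeasurable.mul ?_ (AEStronglyMeasurable.mul ?_ ?_)
        · exact Continuous.aestronglyMeasurable (by fun_prop)
        · exact (hK.comp (by fun_prop : Measurable fun p : ℝ × ℝ => p.1 - p.2)).aestronglyMeasurable
        · exact hv1.aestronglyMeasurable.comp_snd
      · refine Filter.Eventually.of_forall fun p => ?_
        simp only [Function.uncurry, norm_mul]
        have : ‖Complex.exp (-(m * p.1 * Complex.I))‖ = 1 := by
          rw [Complex.norm_exp]; simp
        rw [this, one_mul]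
        have h3 : ‖K (p.1 - p.2)‖ ≤ ‖(B:ℂ)‖ := by
          refine (hB _).trans ?_
          rw [Complex.norm_real]; exact le_abs_self B
        gcongr
    simp only [hu]
    simp only [intervalIntegral.integral_of_le h2π.le]
    calc _ = ∫ x in Ioc 0 (2 * π), ∫ t in Ioc 0 (2 * π), Complex.exp (-(m * x * Complex.I)) * (K (x - t) * v t) := by
          congr 1; ext x; rw [integral_const_mul]
      _ = ∫ t in Ioc 0 (2 * π), ∫ x in Ioc 0 (2 * π), Complex.exp (-(m * x * Complex.I)) * (K (x - t) * v t) :=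
          integral_integral_swap hIgr
      _ = ∫ t in Ioc 0 (2 * π), (∫ x in Ioc 0 (2 * π), Complex.exp (-(m * x * Complex.I)) * K x) * (Complex.exp (-(m * t * Complex.I)) * v t) := by
          congr 1; ext t
          have h1 : ∀ x : ℝ, Complex.exp (-(m * x * Complex.I)) * (K (x - t) * v t) =
             (Complex.exp (-(m * ((x - t : ℝ) : ℂ) * Complex.I)) * K (x - t)) * (Complex.exp (-(m * t * Complex.I)) * v t) := by
            intro x
            have : Complex.exp (-(m * x * Complex.I)) = Complex.exp (-(m * ((x - t : ℝ) : ℂ) * Complex.I)) * Complex.exp (-(m * t * Complex.I)) := by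
              rw [← Complex.exp_add]; congr 1; push_cast; ring
            rw [this]; ring
          simp_rw [h1]
          rw [integral_mul_const]
          congr 1
          rw [← intervalIntegral.integral_of_le h2π.le, ← intervalIntegral.integral_of_le h2π.le,
            intervalIntegral.integral_comp_sub_right (fun x : ℝ => Complex.exp (-(m * (x:ℂ) * Complex.I)) * K x) t]
          have hp : Function.Periodic (fun x : ℝ => Complex.exp (-(m * (x:ℂ) * Complex.I)) * K x) (2 * π) := by
            intro x
            simp only
            rw [hper x]
            congr 1
            rw [Complex.exp_eq_exp_iff_exists_int]
            refine ⟨-m, ?_⟩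
            push_cast; ring
          have := hp.intervalIntegral_add_eq (0 - t) 0
          rw [zero_add, show 0 - t + 2 * π = 2 * π - t by ring] at this
          exact this
      _ = _ := by rw [integral_const_mul]
  have s1 := hasSum_sq_fourierCoeffOn h2π hu2
  have s2 := (hasSum_sq_fourierCoeffOn h2π hv).mul_left (M ^ 2)
  have le := hasSum_le (fun m => ?_) s1 s2
  · simp only [sub_zero, smul_eq_mul] at le
    have h3 : (0:ℝ) < (2 * π)⁻¹ := by positivity
    refine le_of_mul_le_mul_left ?_ h3
    linarith
  · rw [key, key, conv, ← mul_pow]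
    have h4 := hM m
    gcongr
    rw [norm_smul, norm_smul, norm_mul]
    calc _ ≤ ‖1 / (2 * π)‖ * (M * ‖∫ x in (0:ℝ)..(2 * π), Complex.exp (-(m * x * Complex.I)) * v x‖) := by gcongr
      _ = _ := by ring

lemma sin_null (θ : ℝ) : ∀ᵐ t : ℝ, Real.sin ((θ - t + π) / 2) ≠ 0 := by
  have : ({t : ℝ | Real.sin ((θ - t + π) / 2) = 0}).Countable := by
    refine (countable_range (fun n : ℤ => θ + π - 2 * (n * π))).mono ?_
    intro t ht
    obtain ⟨n, hn⟩ := Real.sin_eq_zero_iff.1 ht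
    exact ⟨n, by simp only; rw [hn]; ring⟩
  have h := this.measure_zero volume
  rw [ae_iff]
  simpa using h

lemma conv_cont (K v : ℝ → ℂ) (B : ℝ) (hK : Measurable K) (hB : ∀ x, ‖K x‖ ≤ B)
    (hc : ∀ φ, Real.sin ((φ + π) / 2) ≠ 0 → ContinuousAt K φ)
    (hv : Integrable v (volume.restrict (Ioc 0 (2 * π)))) :
    Continuous fun θ : ℝ => ∫ t in (0:ℝ)..(2 * π), K (θ - t) * v t := by
  have h2π : (0:ℝ) ≤ 2 * π := by positivity
  simp only [intervalIntegral.integral_of_le h2π]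
  rw [continuous_iff_continuousAt]
  intro θ
  refine continuousAt_of_dominated (bound := fun t => B * ‖v t‖) ?_ ?_ (hv.norm.const_mul B) ?_
  · exact Filter.Eventually.of_forall fun x =>
      (hK.comp (measurable_const.sub measurable_id)).aestronglyMeasurable.mul hv.1
  · refine Filter.Eventually.of_forall fun x => Filter.Eventually.of_forall fun t => ?_
    rw [norm_mul]
    exact mul_le_mul_of_nonneg_right (hB _) (norm_nonneg _)
  · filter_upwards [ae_restrict_of_ae (sin_null θ)] with t ht
    exact ((hc (θ - t) ht).comp (f := fun x => x - t) (by fun_prop)).mul continuousAt_const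

lemma young_bound (K v : ℝ → ℂ) (D : ℝ) (_hD : 0 ≤ D) (hB : ∀ x, ‖K x‖ ≤ D)
    (hv : MemLp v 2 (volume.restrict (Ioc 0 (2 * π)))) (θ : ℝ) :
    ‖∫ t in (0:ℝ)..(2 * π), K (θ - t) * v t‖ ^ 2 ≤ 2 * π * D ^ 2 * ∫ t in (0:ℝ)..(2 * π), ‖v t‖ ^ 2 := by
  have h2π : (0:ℝ) < 2 * π := by positivity
  have hv1 : Integrable v (volume.restrict (Ioc 0 (2 * π))) := hv.integrable (by norm_num)
  have hv2 : Integrable (fun t => ‖v t‖ ^ 2) (volume.restrict (Ioc 0 (2 * π))) := by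
    simpa using hv.integrable_norm_pow (p := 2) (by norm_num)
  have h1 : ‖∫ t in (0:ℝ)..(2 * π), K (θ - t) * v t‖ ≤ D * ∫ t in (0:ℝ)..(2 * π), ‖v t‖ := by
    rw [← intervalIntegral.integral_const_mul]
    refine intervalIntegral.norm_integral_le_of_norm_le h2π.le ?_ ?_
    · refine Filter.Eventually.of_forall fun t _ => ?_
      rw [norm_mul]
      exact mul_le_mul_of_nonneg_right (hB _) (norm_nonneg _)
    · rw [intervalIntegrable_iff_integrableOn_Ioc_of_le h2π.le]
      exact hv1.norm.const_mul D
  have h2 : (∫ t in (0:ℝ)..(2 * π), ‖v t‖) ^ 2 ≤ 2 * π * ∫ t in (0:ℝ)..(2 * π), ‖v t‖ ^ 2 := by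
    simp only [intervalIntegral.integral_of_le h2π.le]
    set A := ∫ t in Ioc 0 (2 * π), ‖v t‖ with hA
    have h3 : 0 ≤ ∫ t in Ioc 0 (2 * π), (‖v t‖ - A / (2 * π)) ^ 2 :=
      integral_nonneg fun t => sq_nonneg _
    have h4 : ∫ t in Ioc 0 (2 * π), (‖v t‖ - A / (2 * π)) ^ 2 =
        (∫ t in Ioc 0 (2 * π), ‖v t‖ ^ 2) - A ^ 2 / (2 * π) := by
      have : ∀ t, (‖v t‖ - A / (2 * π)) ^ 2 =
        ‖v t‖ ^ 2 - (2 * (A / (2 * π)) * ‖v t‖ - (A / (2 * π)) ^ 2) := fun t => by ring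
      simp_rw [this]
      have hi2 : Integrable (fun t => 2 * (A / (2 * π)) * ‖v t‖ - (A / (2 * π)) ^ 2)
          (volume.restrict (Ioc 0 (2 * π))) := (hv1.norm.const_mul _).sub (integrable_const _)
      rw [integral_sub hv2 hi2,
        integral_sub (hv1.norm.const_mul _) (integrable_const _), integral_const_mul, ← hA]
      simp [h2π.le]
      field_simp
      ring
    rw [h4, sub_nonneg, div_le_iff₀ h2π] at h3
    linarith
  calc _ ≤ (D * ∫ t in (0:ℝ)..(2 * π), ‖v t‖) ^ 2 := by gcongr
    _ = D ^ 2 * (∫ t in (0:ℝ)..(2 * π), ‖v t‖) ^ 2 := by ring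
    _ ≤ D ^ 2 * (2 * π * ∫ t in (0:ℝ)..(2 * π), ‖v t‖ ^ 2) := by gcongr
    _ = _ := by ring

lemma bb_continuous : Continuous bb := by unfold bb; fun_prop

lemma conv_main (χ : ℝ → ℝ) (hχ : Continuous χ) (X ε : ℝ) (hX : ∀ x, |χ x| ≤ X) (hε : 0 < ε)
    (h1 : ∀ x ∈ Set.Icc (-(ε / 2)) (ε / 2), χ x = 1) (lam : ℝ) (hl : 0 < lam) (v : ℝ → ℂ)
    (hv : MemLp v 2 (volume.restrict (Ioc 0 (2 * π)))) :
    (Continuous fun θ : ℝ => ∫ t in (0:ℝ)..(2 * π), ((χ (bb (θ - t)) : ℝ) : ℂ) * Jint lam (θ - t) * v t) ∧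
    ∫ θ in (0:ℝ)..(2 * π), ‖∫ t in (0:ℝ)..(2 * π), ((χ (bb (θ - t)) : ℝ) : ℂ) * Jint lam (θ - t) * v t‖ ^ 2 ≤
      (32 * π ^ 2 + 8 * π ^ 2 * ((1 + X) * (8 / ε ^ 2)) ^ 2) / lam * ∫ t in (0:ℝ)..(2 * π), ‖v t‖ ^ 2 := by
  have h2π : (0:ℝ) < 2 * π := by positivity
  have hX0 : 0 ≤ X := (abs_nonneg _).trans (hX 0)
  have hv1 : Integrable v (volume.restrict (Ioc 0 (2 * π))) := hv.integrable (by norm_num)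
  set D : ℝ := (1 + X) * (8 / ε ^ 2) with hD
  have hD0 : 0 ≤ D := by positivity
  have hsl : 0 < √lam := Real.sqrt_pos.2 hl
  set k : ℝ → ℂ := fun φ => ((χ (bb φ) : ℝ) : ℂ) * Jint lam φ with hk
  set k2 : ℝ → ℂ := fun φ => ((1 - χ (bb φ) : ℝ) : ℂ) * Jint lam φ with hk2
  have hχm : Continuous (fun φ => ((χ (bb φ) : ℝ) : ℂ)) :=
    Complex.continuous_ofReal.comp (hχ.comp bb_continuous)
  have hχm2 : Continuous (fun φ => ((1 - χ (bb φ) : ℝ) : ℂ)) :=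
    Complex.continuous_ofReal.comp (continuous_const.sub (hχ.comp bb_continuous))
  have hkm : Measurable k := hχm.measurable.mul (Jint_measurable lam)
  have hk2m : Measurable k2 := hχm2.measurable.mul (Jint_measurable lam)
  have hkB : ∀ x, ‖k x‖ ≤ X * π := fun x => by
    simp only [hk, norm_mul, Complex.norm_real, Real.norm_eq_abs]
    exact mul_le_mul (hX _) (Jint_bound _ _) (norm_nonneg _) hX0
  have hk2B : ∀ x, ‖k2 x‖ ≤ D / √lam := fun x => by
    simp only [hk2, norm_mul, Complex.norm_real, Real.norm_eq_abs]
    by_cases hx : bb x ∈ Set.Icc (-(ε / 2)) (ε / 2)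
    · rw [h1 _ hx]; simp; positivity
    · have h3 : ε ^ 2 / 8 ≤ Real.sin ((x + π) / 2) ^ 2 := by
        have h4 : (ε / 2) ^ 2 ≤ bb x ^ 2 := by
          by_contra hcon
          push Not at hcon
          have := abs_lt_of_sq_lt_sq hcon (by positivity)
          exact hx ⟨(abs_lt.1 this).1.le, (abs_lt.1 this).2.le⟩
        rw [bb, mul_pow, Real.sq_sqrt (by norm_num)] at h4
        linarith
      have h5 : Real.sin ((x + π) / 2) ≠ 0 := by
        intro h; rw [h] at h3; have : 0 < ε ^ 2 / 8 := by positivity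
        norm_num at h3; linarith
      have h6 : |1 - χ (bb x)| ≤ 1 + X := by
        calc _ ≤ |(1:ℝ)| + |χ (bb x)| := abs_sub _ _
          _ ≤ _ := by rw [abs_one]; gcongr; exact hX _
      have h7 : ‖Jint lam x‖ ≤ 8 / ε ^ 2 / √lam := by
        refine (Jint_decay lam x hl h5).trans ?_
        have h8 : 1 / Real.sin ((x + π) / 2) ^ 2 ≤ 8 / ε ^ 2 := by
          calc 1 / Real.sin ((x + π) / 2) ^ 2 ≤ 1 / (ε ^ 2 / 8) := by gcongr
            _ = _ := by field_simp
        exact div_le_div_of_nonneg_right h8 hsl.le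
      calc _ ≤ (1 + X) * (8 / ε ^ 2 / √lam) := by gcongr
        _ = _ := by rw [hD]; ring
  have hkc := conv_cont k v _ hkm hkB (fun φ h => hχm.continuousAt.mul (Jint_continuousAt lam φ h)) hv1
  have hk2c := conv_cont k2 v _ hk2m hk2B (fun φ h => hχm2.continuousAt.mul (Jint_continuousAt lam φ h)) hv1
  have hJc := conv_cont (Jint lam) v _ (Jint_measurable lam) (Jint_bound lam)
    (fun φ h => Jint_continuousAt lam φ h) hv1
  refine ⟨hkc, ?_⟩
  have hIgr : ∀ (K : ℝ → ℂ) (B : ℝ), Measurable K → (∀ x, ‖K x‖ ≤ B) → ∀ θ : ℝ,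
      IntervalIntegrable (fun t => K (θ - t) * v t) volume 0 (2 * π) := fun K B hK hB θ => by
    rw [intervalIntegrable_iff_integrableOn_Ioc_of_le h2π.le]
    refine (hv1.norm.const_mul B).mono' ((hK.comp (measurable_const.sub measurable_id)).aestronglyMeasurable.mul hv1.1) ?_
    refine Filter.Eventually.of_forall fun t => ?_
    rw [norm_mul]
    exact mul_le_mul_of_nonneg_right (hB _) (norm_nonneg _)
  have hdec : ∀ θ, ∫ t in (0:ℝ)..(2 * π), k (θ - t) * v t =
      (∫ t in (0:ℝ)..(2 * π), Jint lam (θ - t) * v t) - ∫ t in (0:ℝ)..(2 * π), k2 (θ - t) * v t := by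
    intro θ
    rw [← intervalIntegral.integral_sub (hIgr _ _ (Jint_measurable lam) (Jint_bound lam) θ)
      (hIgr _ _ hk2m hk2B θ)]
    refine intervalIntegral.integral_congr fun x _ => ?_
    simp only [hk, hk2]
    push_cast
    ring
  set V := ∫ t in (0:ℝ)..(2 * π), ‖v t‖ ^ 2 with hV
  have hV0 : 0 ≤ V := intervalIntegral.integral_nonneg h2π.le fun t _ => by positivity
  have hA := multiplier_bound (Jint lam) v _ _ (Jint_measurable lam) (Jint_bound lam) (Jint_periodic lam)
    (Jint_fourier lam hl) hv hJc
  calc ∫ θ in (0:ℝ)..(2 * π), ‖∫ t in (0:ℝ)..(2 * π), k (θ - t) * v t‖ ^ 2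
      ≤ ∫ θ in (0:ℝ)..(2 * π), (2 * ‖∫ t in (0:ℝ)..(2 * π), Jint lam (θ - t) * v t‖ ^ 2 +
          2 * (2 * π * (D / √lam) ^ 2 * V)) := by
        refine intervalIntegral.integral_mono_on h2π.le ?_ ?_ fun θ _ => ?_
        · exact (hkc.norm.pow 2).intervalIntegrable _ _
        · exact (((hJc.norm.pow 2).const_mul 2).add continuous_const).intervalIntegrable _ _
        · have h8 := young_bound k2 v (D / √lam) (by positivity) hk2B hv θ
          rw [hdec θ]
          have h9 := norm_sub_le (∫ t in (0:ℝ)..(2 * π), Jint lam (θ - t) * v t) (∫ t in (0:ℝ)..(2 * π), k2 (θ - t) * v t)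
          have h10 := pow_le_pow_left₀ (norm_nonneg _) h9 2
          nlinarith [sq_nonneg (‖∫ t in (0:ℝ)..(2 * π), Jint lam (θ - t) * v t‖ - ‖∫ t in (0:ℝ)..(2 * π), k2 (θ - t) * v t‖)]
    _ = 2 * (∫ θ in (0:ℝ)..(2 * π), ‖∫ t in (0:ℝ)..(2 * π), Jint lam (θ - t) * v t‖ ^ 2) +
          2 * π * (2 * (2 * π * (D / √lam) ^ 2 * V)) := by
        have hJ2 : Continuous fun θ : ℝ => 2 * ‖∫ t in (0:ℝ)..(2 * π), Jint lam (θ - t) * v t‖ ^ 2 :=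
          (hJc.norm.pow 2).const_mul 2
        rw [intervalIntegral.integral_add (hJ2.intervalIntegrable _ _)
          (continuous_const.intervalIntegrable _ _), intervalIntegral.integral_const_mul]
        simp
        ring
    _ ≤ 2 * ((4 * π / √lam) ^ 2 * V) + 2 * π * (2 * (2 * π * (D / √lam) ^ 2 * V)) := by gcongr
    _ = _ := by
      rw [div_pow, div_pow, Real.sq_sqrt hl.le]
      field_simp
      ring

lemma lint_sq_eq (u : ℝ → ℂ) (s : Set ℝ) (hu : Integrable (fun t => ‖u t‖ ^ 2) (volume.restrict s)) :
    ∫⁻ t in s, ‖u t‖ₑ ^ 2 = ENNReal.ofReal (∫ t in s, ‖u t‖ ^ 2) := by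
  rw [ofReal_integral_eq_lintegral_ofReal hu (Filter.Eventually.of_forall fun t => by positivity)]
  refine lintegral_congr fun t => ?_
  rw [ENNReal.ofReal_pow (norm_nonneg _), ofReal_norm]

lemma Ico_restrict : (volume.restrict (Ico (0:ℝ) (2 * π))) = volume.restrict (Ioc 0 (2 * π)) :=
  Measure.restrict_congr_set Ico_ae_eq_Ioc

lemma conv_main' (χ : ℝ → ℝ) (hχ : Continuous χ) (X ε : ℝ) (hX : ∀ x, |χ x| ≤ X) (hε : 0 < ε)
    (h1 : ∀ x ∈ Set.Icc (-(ε / 2)) (ε / 2), χ x = 1) (lam : ℝ) (hl : 0 < lam) (v : ℝ → ℂ)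
    (hv : MemLp v 2 (volume.restrict (Ico 0 (2 * π)))) :
    (Continuous fun θ : ℝ => ∫ t in Ico 0 (2 * π), ((χ (bb (θ - t)) : ℝ) : ℂ) * Jint lam (θ - t) * v t) ∧
    ∫⁻ θ in Ico 0 (2 * π), ‖∫ t in Ico 0 (2 * π), ((χ (bb (θ - t)) : ℝ) : ℂ) * Jint lam (θ - t) * v t‖ₑ ^ 2 ≤
      ENNReal.ofReal ((32 * π ^ 2 + 8 * π ^ 2 * ((1 + X) * (8 / ε ^ 2)) ^ 2) / lam) *
        ∫⁻ t in Ico 0 (2 * π), ‖v t‖ₑ ^ 2 := by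
  have h2π : (0:ℝ) < 2 * π := by positivity
  simp only [Ico_restrict] at hv ⊢
  have h := conv_main χ hχ X ε hX hε h1 lam hl v hv
  simp only [intervalIntegral.integral_of_le h2π.le] at h
  refine ⟨h.1, ?_⟩
  rw [lint_sq_eq, lint_sq_eq, ← ENNReal.ofReal_mul (by positivity)]
  · exact ENNReal.ofReal_le_ofReal h.2
  · simpa using hv.integrable_norm_pow (p := 2) (by norm_num)
  · exact (h.1.norm.pow 2).integrableOn_Ioc

lemma riemann_le (L : ℝ) (hL : 0 < L) (F : ℝ → ℝ) (hF : Continuous F) (t : ℕ → ℝ)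
    (ht : ∀ n : ℕ, t n ∈ Ico 0 (L / (n + 1))) (e : ℝ) (he : 0 < e) :
    ∀ᶠ n : ℕ in Filter.atTop, (L / (n + 1)) * ∑ k ∈ Finset.range (n + 1), F (t n + k * (L / (n + 1))) ≤
      (∫ x in (0:ℝ)..L, F x) + e := by
  have hu : UniformContinuousOn F (Icc 0 L) :=
    isCompact_Icc.uniformContinuousOn_of_continuous hF.continuousOn
  rw [Metric.uniformContinuousOn_iff] at hu
  obtain ⟨d, hd, hdd⟩ := hu (e / L) (by positivity)
  have hlim : Filter.Tendsto (fun n : ℕ => L / ((n:ℝ) + 1)) Filter.atTop (nhds 0) :=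
    tendsto_const_div_atTop_nhds_zero_nat L |>.comp (Filter.tendsto_add_atTop_nat 1) |>.congr
      (fun n => by simp)
  filter_upwards [hlim.eventually (gt_mem_nhds hd)] with n hn
  set w : ℝ := L / (n + 1) with hw
  have hw0 : 0 < w := by positivity
  have hwL : ((n:ℝ) + 1) * w = L := by rw [hw]; field_simp
  have hsum : ∑ k ∈ Finset.range (n + 1), ∫ x in ((k:ℝ) * w)..((k + 1 : ℕ) * w), (F x + e / L) =
      ∫ x in (0:ℝ)..L, (F x + e / L) := by
    have := intervalIntegral.sum_integral_adjacent_intervals (f := fun x => F x + e / L)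
      (μ := volume) (a := fun k : ℕ => (k:ℝ) * w) (n := n + 1)
      (fun k _ => (hF.add continuous_const).intervalIntegrable _ _)
    rw [this]
    push_cast
    rw [hwL, zero_mul]
  have h3 : ∫ x in (0:ℝ)..L, (F x + e / L) = (∫ x in (0:ℝ)..L, F x) + e := by
    rw [intervalIntegral.integral_add (hF.intervalIntegrable _ _) (continuous_const.intervalIntegrable _ _)]
    simp; field_simp
  rw [← h3, ← hsum, Finset.mul_sum]
  refine Finset.sum_le_sum fun k hk => ?_
  have hk' : (k:ℝ) + 1 ≤ n + 1 := by exact_mod_cast Finset.mem_range.1 hk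
  have hle : (k:ℝ) * w ≤ ((k + 1 : ℕ):ℝ) * w := by push_cast; nlinarith
  have h4 : w * F (t n + k * w) = ∫ x in ((k:ℝ) * w)..((k + 1 : ℕ) * w), F (t n + k * w) := by
    simp; left; ring
  rw [h4]
  refine intervalIntegral.integral_mono_on hle (continuous_const.intervalIntegrable _ _)
    ((hF.add continuous_const).intervalIntegrable _ _) fun x hx => ?_
  have hx1 := hx.1
  have hx2 := hx.2
  push_cast at hx2
  have ht1 := (ht n).1
  have ht2 := (ht n).2
  have hk0 : (0:ℝ) ≤ k * w := by positivity
  have hkL : ((k:ℝ) + 1) * w ≤ L := by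
    rw [← hwL]; exact mul_le_mul_of_nonneg_right hk' hw0.le
  have := hdd (t n + k * w) ⟨by linarith, by linarith⟩ x ⟨by linarith, by linarith⟩ (by
    rw [Real.dist_eq, abs_lt]; constructor <;> linarith)
  rw [Real.dist_eq, abs_lt] at this
  linarith [this.2]

lemma lint_partition (h : ℝ → ℝ≥0∞) (hm : Measurable h) (w : ℝ) (hw : 0 < w) (n : ℕ) :
    ∫⁻ x in Ico 0 w, ∑ k ∈ Finset.range n, h (x + k * w) = ∫⁻ x in Ico 0 (n * w), h x := by
  induction n with
  | zero => simp
  | succ n ih =>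
    have h1 : ∫⁻ x in Ico 0 w, h (x + n * w) = ∫⁻ x in Ico (n * w) ((n + 1 : ℕ) * w), h x := by
      have hmp := measurePreserving_add_right (volume : Measure ℝ) ((n:ℝ) * w)
      have := hmp.setLIntegral_comp_preimage (s := Ico (n * w) ((n + 1 : ℕ) * w)) measurableSet_Ico hm
      rw [← this]
      congr 2
      ext x
      simp only [mem_Ico, mem_preimage]
      push_cast
      constructor <;> rintro ⟨a, b⟩ <;> constructor <;> linarith
    simp_rw [Finset.sum_range_succ]
    have hm2 : Measurable fun x => h (x + n * w) := hm.comp (measurable_id.add_const _)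
    rw [lintegral_add_right _ hm2, ih, h1,
      ← lintegral_union measurableSet_Ico]
    · rw [Ico_union_Ico_eq_Ico (by positivity) (by push_cast; nlinarith)]
    · rw [Set.disjoint_left]
      intro x hx hx'
      exact absurd hx.2 (not_lt.2 hx'.1)

lemma sampling (L : ℝ) (hL : 0 < L) (T : ℝ → ℝ≥0∞) (g : ℝ → ℝ → ℝ≥0∞) (μ : Measure ℝ)
    (N : ℝ → ℝ≥0∞) (c₀ A B : ℝ≥0∞) (hc₀ : c₀ ≠ ∞) (hA : A ≠ ∞) (hA0 : A ≠ 0) (hB : B ≠ ∞)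
    (h0 : ∀ θ, AEMeasurable (g θ) μ) (h1 : ∀ θ, T θ ≤ c₀ * ∫⁻ r, g θ r ∂μ)
    (h2 : ∀ S : Set ℝ, S.Countable → ∀ᵐ r ∂μ, N r ≠ ∞ → ∃ F : ℝ → ℝ, Continuous F ∧ (∀ x, 0 ≤ F x) ∧
      (∀ θ ∈ S, g θ r ≤ ENNReal.ofReal (F θ)) ∧
      ∫⁻ θ in Ico 0 L, ENNReal.ofReal (F θ) ≤ A * N r)
    (h3 : ∀ᵐ r ∂μ, ∀ θ, g θ r ≤ B * N r) (h4 : ∫⁻ r, N r ∂μ ≠ ∞) :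
    ∫⁻ θ in Ico 0 L, T θ ≤ c₀ * (A * ∫⁻ r, N r ∂μ) := by
  obtain ⟨h, hm, hle, hI⟩ := exists_measurable_le_lintegral_eq (μ := volume.restrict (Ico 0 L)) T
  have hTb : ∀ θ, T θ ≤ c₀ * (B * ∫⁻ r, N r ∂μ) := fun θ => by
    refine (h1 θ).trans ?_
    gcongr
    rw [← lintegral_const_mul' _ _ hB]
    exact lintegral_mono_ae (h3.mono fun r hr => hr θ)
  have hfin : ∫⁻ θ in Ico 0 L, h θ ≠ ∞ := by
    refine ne_top_of_le_ne_top ?_ (lintegral_mono (fun θ => (hle θ).trans (hTb θ)))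
    rw [lintegral_const]
    simp
    finiteness
  rw [hI]
  set I := ∫⁻ θ in Ico 0 L, h θ with hIdef
  have hex : ∀ n : ℕ, ∃ t ∈ Ico 0 (L / (n + 1)),
      I ≤ ENNReal.ofReal (L / (n + 1)) * ∑ k ∈ Finset.range (n + 1), h (t + k * (L / (n + 1))) := by
    intro n
    set w : ℝ := L / (n + 1) with hw
    have hw0 : 0 < w := by positivity
    have hwL : ((n:ℝ) + 1) * w = L := by rw [hw]; field_simp
    have hp := lint_partition h hm w hw0 (n + 1)
    push_cast at hp
    rw [hwL] at hp
    obtain ⟨t, ht, hta⟩ := exists_setLAverage_le (μ := volume) (s := Ico 0 w)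
      (f := fun x => ∑ k ∈ Finset.range (n + 1), h (x + k * w)) (by simp [hw0])
      measurableSet_Ico.nullMeasurableSet (by rw [hp]; exact hfin)
    refine ⟨t, ht, ?_⟩
    rw [setLAverage_eq, hp, Real.volume_Ico, sub_zero] at hta
    rw [mul_comm]
    exact (ENNReal.div_le_iff (by simp [hw0]) (by simp)).1 hta
  choose t ht htI using hex
  set θ : ℕ → ℕ → ℝ := fun n k => t n + k * (L / (n + 1)) with hθ
  set S : Set ℝ := range (fun p : ℕ × ℕ => θ p.1 p.2) with hS
  have hSc : S.Countable := countable_range _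
  set Φ : ℕ → ℝ → ℝ≥0∞ := fun n r =>
    ENNReal.ofReal (L / (n + 1)) * ∑ k ∈ Finset.range (n + 1), g (θ n k) r with hΦ
  have hΦm : ∀ n, AEMeasurable (Φ n) μ := fun n =>
    (Finset.aemeasurable_fun_sum _ fun k _ => h0 _).const_mul _
  have hIΦ : ∀ n, I ≤ c₀ * ∫⁻ r, Φ n r ∂μ := by
    intro n
    refine (htI n).trans ?_
    have : ∫⁻ r, Φ n r ∂μ = ENNReal.ofReal (L / (n + 1)) *
        ∑ k ∈ Finset.range (n + 1), ∫⁻ r, g (θ n k) r ∂μ := by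
      simp only [hΦ]
      rw [lintegral_const_mul' _ _ (by simp), lintegral_finsetSum' _ fun k _ => h0 _]
    rw [this, mul_left_comm]
    gcongr
    rw [Finset.mul_sum]
    refine Finset.sum_le_sum fun k hk => ?_
    exact (hle _).trans (h1 _)
  have hdom : ∀ n, Φ n ≤ᵐ[μ] fun r => ENNReal.ofReal L * B * N r := by
    intro n
    filter_upwards [h3] with r hr
    calc Φ n r ≤ ENNReal.ofReal (L / (n + 1)) * ∑ k ∈ Finset.range (n + 1), B * N r := by
          simp only [hΦ]; gcongr; exact hr _
      _ = ENNReal.ofReal L * B * N r := by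
          rw [Finset.sum_const, Finset.card_range, nsmul_eq_mul, ← mul_assoc, mul_assoc _ B]
          congr 1
          rw [← ENNReal.ofReal_natCast, ← ENNReal.ofReal_mul (by positivity)]
          congr 1
          push_cast
          field_simp
  have hlim : ∀ᵐ r ∂μ, Filter.limsup (fun n => Φ n r) Filter.atTop ≤ A * N r := by
    filter_upwards [h2 S hSc] with r hr
    by_cases hN : N r = ∞
    · rw [hN, ENNReal.mul_top hA0]; exact le_top
    obtain ⟨F, hFc, hF0, hFg, hFi⟩ := hr hN
    refine le_trans ?_ hFi
    have hFI : ∫⁻ x in Ico 0 L, ENNReal.ofReal (F x) = ENNReal.ofReal (∫ x in (0:ℝ)..L, F x) := by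
      rw [intervalIntegral.integral_of_le hL.le, Measure.restrict_congr_set Ico_ae_eq_Ioc,
        ofReal_integral_eq_lintegral_ofReal hFc.integrableOn_Ioc
          (Filter.Eventually.of_forall hF0)]
    rw [hFI]
    have hint0 : 0 ≤ ∫ x in (0:ℝ)..L, F x := intervalIntegral.integral_nonneg hL.le fun x _ => hF0 x
    refine ENNReal.le_of_forall_pos_le_add fun e he _ => ?_
    refine Filter.limsup_le_of_le (by isBoundedDefault) ?_
    filter_upwards [riemann_le L hL F hFc t ht e (by exact_mod_cast he)] with n hn
    calc Φ n r ≤ ENNReal.ofReal (L / (n + 1)) * ∑ k ∈ Finset.range (n + 1), ENNReal.ofReal (F (θ n k)) := by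
          simp only [hΦ]; gcongr with k hk; exact hFg _ ⟨(n, k), rfl⟩
      _ = ENNReal.ofReal ((L / (n + 1)) * ∑ k ∈ Finset.range (n + 1), F (t n + k * (L / (n + 1)))) := by
          rw [ENNReal.ofReal_mul (by positivity), ENNReal.ofReal_sum_of_nonneg fun k _ => hF0 _]
      _ ≤ ENNReal.ofReal ((∫ x in (0:ℝ)..L, F x) + e) := ENNReal.ofReal_le_ofReal hn
      _ = _ := by rw [ENNReal.ofReal_add hint0 e.coe_nonneg, ENNReal.ofReal_coe_nnreal]
  have hfat := limsup_lintegral_le (μ := μ) (f := fun n => (hΦm n).mk (Φ n))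
    (fun r => ENNReal.ofReal L * B * N r) (fun n => (hΦm n).measurable_mk)
    (fun n => (hΦm n).ae_eq_mk.symm.le.trans (hdom n))
    (by rw [lintegral_const_mul' _ _ (by finiteness)]; finiteness)
  have hall : ∀ᵐ r ∂μ, ∀ n, Φ n r = (hΦm n).mk (Φ n) r := ae_all_iff.2 fun n => (hΦm n).ae_eq_mk
  have hfin2 : ∫⁻ r, Filter.limsup (fun n => (hΦm n).mk (Φ n) r) Filter.atTop ∂μ ≤ A * ∫⁻ r, N r ∂μ := by
    rw [← lintegral_const_mul' _ _ hA]
    refine lintegral_mono_ae ?_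
    filter_upwards [hall, hlim] with r h5 h6
    simpa only [← h5] using h6
  have hlow : I ≤ c₀ * Filter.limsup (fun n => ∫⁻ r, (hΦm n).mk (Φ n) r ∂μ) Filter.atTop := by
    by_cases hc : c₀ = 0
    · have := hIΦ 0
      rw [hc] at this ⊢
      simpa using this
    rw [mul_comm]
    refine (ENNReal.div_le_iff hc hc₀).1 ?_
    refine Filter.le_limsup_of_frequently_le (Filter.Frequently.of_forall fun n => ?_) (by isBoundedDefault)
    rw [ENNReal.div_le_iff hc hc₀, mul_comm, ← lintegral_congr_ae (hΦm n).ae_eq_mk]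
    exact hIΦ n
  calc I ≤ _ := hlow
    _ ≤ _ := by gcongr; exact hfat.trans hfin2

lemma cs_lint {μ : Measure ℝ} (f : ℝ → ℝ≥0∞) (hf : AEMeasurable f μ) :
    (∫⁻ x, f x ∂μ) ^ 2 ≤ μ univ * ∫⁻ x, f x ^ 2 ∂μ := by
  have h := ENNReal.lintegral_mul_le_Lp_mul_Lq μ Real.HolderConjugate.two_two hf
    (aemeasurable_const (b := (1 : ℝ≥0∞)))
  simp only [Pi.mul_apply, mul_one, one_pow, lintegral_one, ENNReal.rpow_two] at h
  calc (∫⁻ x, f x ∂μ) ^ 2 ≤ ((∫⁻ x, f x ^ 2 ∂μ) ^ (1 / 2 : ℝ) * μ univ ^ (1 / 2 : ℝ)) ^ 2 := by gcongr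
    _ = _ := by
      rw [mul_pow, ← ENNReal.rpow_two, ← ENNReal.rpow_two, ← ENNReal.rpow_mul, ← ENNReal.rpow_mul]
      norm_num
      rw [mul_comm]

lemma vconstruct (k φ : ℝ → ℂ) (hk : Measurable k) (S : Set ℝ) (hS : S.Countable)
    (hφ : ∫⁻ t in Ico 0 (2 * π), ‖φ t‖ₑ ^ 2 ≠ ∞) :
    ∃ v : ℝ → ℂ, MemLp v 2 (volume.restrict (Ico 0 (2 * π))) ∧
      ∫⁻ t in Ico 0 (2 * π), ‖v t‖ₑ ^ 2 ≤ ∫⁻ t in Ico 0 (2 * π), ‖φ t‖ₑ ^ 2 ∧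
      ∀ θ ∈ S, (∫ t in Ico 0 (2 * π), k (θ - t) * φ t) = 0 ∨
        (∫ t in Ico 0 (2 * π), k (θ - t) * φ t) = ∫ t in Ico 0 (2 * π), k (θ - t) * v t := by
  set μ := volume.restrict (Ico (0:ℝ) (2 * π)) with hμ
  set S' : Set ℝ := {θ ∈ S | Integrable (fun t => k (θ - t) * φ t) μ} with hS'
  have hS'c : S'.Countable := hS.mono (sep_subset _ _)
  have hkm : ∀ θ, Measurable fun t => k (θ - t) := fun θ => hk.comp (measurable_const.sub measurable_id)
  have hsm : ∀ θ, MeasurableSet {t | k (θ - t) ≠ 0} := fun θ =>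
    (hkm θ) (measurableSet_singleton 0).compl
  set U : Set ℝ := ⋃ θ ∈ S', {t | k (θ - t) ≠ 0} with hU
  have hUm : MeasurableSet U := MeasurableSet.biUnion hS'c fun θ _ => hsm θ
  have hvm : AEStronglyMeasurable (U.indicator φ) μ := by
    rw [aestronglyMeasurable_indicator_iff hUm, hU, biUnion_eq_iUnion]
    have := hS'c.to_subtype
    rw [aestronglyMeasurable_iUnion_iff]
    rintro ⟨θ, hθ⟩
    have h1 : AEStronglyMeasurable (fun t => (k (θ - t))⁻¹ * (k (θ - t) * φ t))
        (μ.restrict {t | k (θ - t) ≠ 0}) :=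
      ((hkm θ).inv.aestronglyMeasurable.mul hθ.2.1).mono_measure Measure.restrict_le_self
    refine h1.congr ?_
    filter_upwards [ae_restrict_mem (hsm θ)] with t ht
    rw [inv_mul_cancel_left₀ ht]
  have hle : ∫⁻ t, ‖U.indicator φ t‖ₑ ^ 2 ∂μ ≤ ∫⁻ t, ‖φ t‖ₑ ^ 2 ∂μ := by
    refine lintegral_mono fun t => ?_
    gcongr
    exact enorm_indicator_le_enorm_self _ _
  refine ⟨U.indicator φ, ⟨hvm, ?_⟩, hle, ?_⟩
  · rw [eLpNorm_lt_top_iff_lintegral_rpow_enorm_lt_top (by norm_num) (by norm_num)]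
    simp only [ENNReal.toReal_ofNat, ENNReal.rpow_two]
    exact hle.trans_lt hφ.lt_top
  · intro θ hθ
    by_cases hi : Integrable (fun t => k (θ - t) * φ t) μ
    · right
      refine integral_congr_ae (Filter.Eventually.of_forall fun t => ?_)
      by_cases ht : t ∈ U
      · simp only [indicator_of_mem ht]
      · have : k (θ - t) = 0 := by
          by_contra hne
          exact ht (mem_biUnion (show θ ∈ S' from ⟨hθ, hi⟩) hne)
        simp only [this, zero_mul]
    · left
      exact integral_undef hi

lemma inner_bound (k φ : ℝ → ℂ) (hk : Measurable k) (D : ℝ) (_hD : 0 ≤ D) (hB : ∀ x, ‖k x‖ ≤ D)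
    (hφ : ∫⁻ t in Ico 0 (2 * π), ‖φ t‖ₑ ^ 2 ≠ ∞) (θ : ℝ) :
    ‖∫ t in Ico 0 (2 * π), k (θ - t) * φ t‖ₑ ^ 2 ≤
      ENNReal.ofReal (2 * π * D ^ 2) * ∫⁻ t in Ico 0 (2 * π), ‖φ t‖ₑ ^ 2 := by
  obtain ⟨v, hv, hvle, hve⟩ := vconstruct k φ hk {θ} (countable_singleton θ) hφ
  rcases hve θ rfl with h | h
  · rw [h]; simp
  · rw [h]
    have h1 : ‖∫ t in Ico 0 (2 * π), k (θ - t) * v t‖ₑ ≤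
        ENNReal.ofReal D * ∫⁻ t in Ico 0 (2 * π), ‖v t‖ₑ := by
      refine (enorm_integral_le_lintegral_enorm _).trans ?_
      rw [← lintegral_const_mul' _ _ (by simp)]
      refine lintegral_mono fun t => ?_
      rw [enorm_mul]
      gcongr
      rw [← ofReal_norm]
      exact ENNReal.ofReal_le_ofReal (hB _)
    have h2 := cs_lint (fun t => ‖v t‖ₑ) hv.1.enorm
    rw [Measure.restrict_apply_univ, Real.volume_Ico, sub_zero] at h2
    calc _ ≤ (ENNReal.ofReal D * ∫⁻ t in Ico 0 (2 * π), ‖v t‖ₑ) ^ 2 := by gcongr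
      _ = ENNReal.ofReal D ^ 2 * (∫⁻ t in Ico 0 (2 * π), ‖v t‖ₑ) ^ 2 := by ring
      _ ≤ ENNReal.ofReal D ^ 2 * (ENNReal.ofReal (2 * π) * ∫⁻ t in Ico 0 (2 * π), ‖φ t‖ₑ ^ 2) := by
        gcongr; exact h2.trans (by gcongr)
      _ = _ := by
        rw [ENNReal.ofReal_mul (p := 2 * π) (by positivity), ENNReal.ofReal_pow _hD]; ring

def cc (δ : ℝ) (a : ℝ → ℂ) (β : ℝ → ℝ) (j : ℕ) (r₁ r : ℝ) : ℂ :=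
  (((2 : ℝ) ^ (-(j : ℝ) * (3 / 2 + δ)) : ℝ) : ℂ) * ((β (r₁ + r) : ℝ) : ℂ) *
    ((((r₁ + r) ^ (-(3 / 2 + δ)) : ℝ) : ℂ) * a ((2 : ℝ) ^ (j : ℝ) * (r₁ + r)))

lemma Hker_eq (δ : ℝ) (a : ℝ → ℂ) (β : ℝ → ℝ) (j : ℕ) (r₁ r φ : ℝ) :
    Hker δ a β j r₁ r φ = cc δ a β j r₁ r * Jint ((2 : ℝ) ^ (j : ℝ) * (r₁ * r / (r₁ + r))) φ := by
  unfold Hker cc Jint psi3m Pker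
  conv_rhs => rw [mul_assoc, ← integral_const_mul]
  congr 1
  refine integral_congr_ae (Filter.Eventually.of_forall fun s => ?_)
  simp only
  ring

lemma cc_zero (δ : ℝ) (a : ℝ → ℂ) (β : ℝ → ℝ) (hβs : Function.support β ⊆ Set.Icc (3 / 8) (4 / 3))
    (j : ℕ) (r₁ r : ℝ) (h : cc δ a β j r₁ r ≠ 0) : r₁ + r ∈ Set.Icc (3 / 8 : ℝ) (4 / 3) := by
  apply hβs
  intro h0
  apply h
  simp [cc, h0]

lemma cc_bound (δ : ℝ) (hδ : 0 ≤ δ) (a : ℝ → ℂ) (ha : IsSymbol0 a)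
    (β : ℝ → ℝ) (hβ : Continuous β)
    (hβs : Function.support β ⊆ Set.Icc (3 / 8) (4 / 3)) :
    ∃ C₁ : ℝ, 0 < C₁ ∧ ∀ j r₁ r, ‖cc δ a β j r₁ r‖ ≤ (2 : ℝ) ^ (-(j : ℝ) * (3 / 2 + δ)) * C₁ := by
  obtain ⟨Cβ, hCβ⟩ := isCompact_Icc.exists_bound_of_continuousOn (s := Set.Icc (3 / 8 : ℝ) (4 / 3))
    hβ.continuousOn
  obtain ⟨M, hM⟩ := ha.2.1
  have hCβ0 : 0 ≤ Cβ := (norm_nonneg _).trans (hCβ 1 (by norm_num))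
  have hM0 : 0 ≤ M := (norm_nonneg _).trans (hM 1 (by norm_num))
  refine ⟨Cβ * ((3 / 8 : ℝ) ^ (-(3 / 2 + δ)) * M) + 1, by positivity, fun j r₁ r => ?_⟩
  by_cases h : cc δ a β j r₁ r = 0
  · rw [h, norm_zero]; positivity
  · have hm := cc_zero δ a β hβs j r₁ r h
    have hp : 0 < r₁ + r := by linarith [hm.1]
    unfold cc
    rw [mul_assoc, norm_mul, Complex.norm_real, Real.norm_of_nonneg (by positivity)]
    gcongr
    refine le_trans ?_ (le_add_of_nonneg_right zero_le_one)
    rw [norm_mul, norm_mul, Complex.norm_real, Complex.norm_real]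
    gcongr
    · exact hCβ _ hm
    · rw [Real.norm_of_nonneg (by positivity)]
      exact Real.rpow_le_rpow_of_nonpos (by norm_num) hm.1 (by linarith)
    · exact hM _ (by positivity)

lemma inner_eq (δ : ℝ) (a : ℝ → ℂ) (β χ : ℝ → ℝ) (j : ℕ) (f : ℝ → ℝ → ℂ) (r₁ r θ : ℝ) :
    (∫ t in Set.Ico (0 : ℝ) (2 * Real.pi),
      ((χ (bb (θ - t)) : ℝ) : ℂ) * Hker δ a β j r₁ r (θ - t) * f r t) =
    cc δ a β j r₁ r * ∫ t in Set.Ico (0 : ℝ) (2 * Real.pi),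
      ((χ (bb (θ - t)) : ℝ) : ℂ) * Jint ((2 : ℝ) ^ (j : ℝ) * (r₁ * r / (r₁ + r))) (θ - t) * f r t := by
  rw [← integral_const_mul]
  refine integral_congr_ae (Filter.Eventually.of_forall fun t => ?_)
  simp only [Hker_eq]
  ring

lemma fixed_r1 (δ : ℝ) (a : ℝ → ℂ) (β : ℝ → ℝ)
    (hβs : Function.support β ⊆ Set.Icc (3 / 8) (4 / 3)) (C₁ : ℝ) (hC₁ : 0 < C₁)
    (hcc : ∀ j r₁ r, ‖cc δ a β j r₁ r‖ ≤ (2 : ℝ) ^ (-(j : ℝ) * (3 / 2 + δ)) * C₁)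
    (χ : ℝ → ℝ) (hχ : Continuous χ) (X ε : ℝ) (hX : ∀ x, |χ x| ≤ X) (hε : 0 < ε)
    (h1 : ∀ x ∈ Set.Icc (-(ε / 2)) (ε / 2), χ x = 1) (j : ℕ) (f : ℝ → ℝ → ℂ) (r₁ : ℝ) (hr₁ : 0 < r₁)
    (hfin : ∫⁻ r in Ioi (0:ℝ), (∫⁻ t in Ico 0 (2 * π), ‖f r t‖ₑ ^ 2) * ENNReal.ofReal r ≠ ∞) :
    ∫⁻ θ in Ico 0 (2 * π), ‖TH δ a β χ j f r₁ θ‖ₑ ^ 2 ≤ ENNReal.ofReal (4 / 3) *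
      (ENNReal.ofReal (((2 : ℝ) ^ (-(j : ℝ) * (3 / 2 + δ)) * C₁) ^ 2 *
        (32 * π ^ 2 + 8 * π ^ 2 * ((1 + X) * (8 / ε ^ 2)) ^ 2) * (4 / 3) / ((2 : ℝ) ^ (j : ℝ) * r₁)) *
        ∫⁻ r in Ioi (0:ℝ), (∫⁻ t in Ico 0 (2 * π), ‖f r t‖ₑ ^ 2) * ENNReal.ofReal r) := by
  have h2π : (0:ℝ) < 2 * π := by positivity
  classical
  have hX0 : 0 ≤ X := (abs_nonneg _).trans (hX 0)
  set E : ℝ := (2 : ℝ) ^ (-(j : ℝ) * (3 / 2 + δ)) * C₁ with hE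
  have hE0 : 0 < E := by positivity
  set CC : ℝ := 32 * π ^ 2 + 8 * π ^ 2 * ((1 + X) * (8 / ε ^ 2)) ^ 2 with hCC
  have hCC0 : 0 < CC := by positivity
  set lam : ℝ → ℝ := fun r => (2 : ℝ) ^ (j : ℝ) * (r₁ * r / (r₁ + r)) with hlam
  set k : ℝ → ℝ → ℂ := fun r φ => ((χ (bb φ) : ℝ) : ℂ) * Jint (lam r) φ with hk
  have hkm : ∀ r, Measurable (k r) := fun r =>
    (Complex.continuous_ofReal.comp (hχ.comp bb_continuous)).measurable.mul (Jint_measurable _)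
  have hkB : ∀ r x, ‖k r x‖ ≤ X * π := fun r x => by
    simp only [hk, norm_mul, Complex.norm_real, Real.norm_eq_abs]
    exact mul_le_mul (hX _) (Jint_bound _ _) (norm_nonneg _) hX0
  set G : ℝ → ℝ → ℂ := fun θ r =>
    (cc δ a β j r₁ r * ∫ t in Ico 0 (2 * π), k r (θ - t) * f r t) * (r : ℂ) with hG
  have hTG : ∀ θ, TH δ a β χ j f r₁ θ = ∫ r in Ioi (0:ℝ), G θ r := by
    intro θ
    unfold TH
    refine integral_congr_ae (Filter.Eventually.of_forall fun r => ?_)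
    simp only [hG, hk, hlam, inner_eq]
  set g : ℝ → ℝ → ℝ≥0∞ := fun θ r => if Integrable (G θ) (volume.restrict (Ioi 0)) then ‖G θ r‖ₑ ^ 2 else 0 with hg
  have hgle : ∀ θ r, g θ r ≤ ‖G θ r‖ₑ ^ 2 := by
    intro θ r
    simp only [hg]
    split_ifs
    · exact le_rfl
    · exact bot_le
  have hGn : ∀ θ r, 0 < r → ‖G θ r‖ₑ ^ 2 = ENNReal.ofReal ((‖cc δ a β j r₁ r‖ * r) ^ 2) *
      ‖∫ t in Ico 0 (2 * π), k r (θ - t) * f r t‖ₑ ^ 2 := by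
    intro θ r hr
    simp only [hG]
    rw [enorm_mul, enorm_mul, ENNReal.ofReal_pow (by positivity), ENNReal.ofReal_mul (norm_nonneg _),
      ofReal_norm, ← ofReal_norm (r : ℂ), Complex.norm_real, Real.norm_of_nonneg hr.le]
    ring
  have hr43 : ∀ r, cc δ a β j r₁ r ≠ 0 → r ≤ 4 / 3 := fun r h => by
    have := (cc_zero δ a β hβs j r₁ r h).2
    linarith
  refine sampling (2 * π) h2π _ g (volume.restrict (Ioi 0))
    (fun r => (∫⁻ t in Ico 0 (2 * π), ‖f r t‖ₑ ^ 2) * ENNReal.ofReal r) (ENNReal.ofReal (4 / 3)) _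
    (ENNReal.ofReal (E ^ 2 * (4 / 3) * (2 * π * (X * π) ^ 2) + 1)) (by simp) (by simp) ?_ (by simp)
    ?_ ?_ ?_ ?_ hfin
  · rw [Ne, ENNReal.ofReal_eq_zero, not_le]; positivity
  · intro θ
    by_cases hi : Integrable (G θ) (volume.restrict (Ioi 0))
    · simp only [hg, if_pos hi]
      exact hi.1.enorm.pow_const 2
    · simp only [hg, if_neg hi]
      exact aemeasurable_const
  · intro θ
    rw [hTG]
    by_cases hi : Integrable (G θ) (volume.restrict (Ioi 0))
    · simp only [hg, if_pos hi]
      have hind : ∀ r, ‖G θ r‖ₑ = (Iic (4 / 3)).indicator (fun r => ‖G θ r‖ₑ) r := by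
        intro r
        by_cases hr : r ∈ Iic (4 / 3 : ℝ)
        · rw [indicator_of_mem hr]
        · rw [indicator_of_notMem hr]
          have : cc δ a β j r₁ r = 0 := by
            by_contra h
            exact hr (hr43 r h)
          simp [hG, this]
      have h5 : ∫⁻ r in Ioi (0:ℝ), ‖G θ r‖ₑ = ∫⁻ r in Ioc (0:ℝ) (4 / 3), ‖G θ r‖ₑ := by
        rw [lintegral_congr hind, lintegral_indicator measurableSet_Iic,
          Measure.restrict_restrict measurableSet_Iic, inter_comm, Ioi_inter_Iic]
      have h6 := cs_lint (μ := volume.restrict (Ioc (0:ℝ) (4 / 3))) (fun r => ‖G θ r‖ₑ)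
        ((hi.1.mono_measure (Measure.restrict_mono Ioc_subset_Ioi_self le_rfl)).enorm)
      rw [Measure.restrict_apply_univ, Real.volume_Ioc, sub_zero] at h6
      calc ‖∫ r in Ioi (0:ℝ), G θ r‖ₑ ^ 2 ≤ (∫⁻ r in Ioi (0:ℝ), ‖G θ r‖ₑ) ^ 2 := by
            gcongr; exact enorm_integral_le_lintegral_enorm _
        _ ≤ _ := by rw [h5]; exact h6
        _ ≤ _ := mul_le_mul' le_rfl (lintegral_mono_set Ioc_subset_Ioi_self)
    · rw [integral_undef hi]; simp
  · intro S hS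
    filter_upwards [ae_restrict_mem measurableSet_Ioi] with r hr hN
    have hr0 : 0 < r := hr
    have hfr : ∫⁻ t in Ico 0 (2 * π), ‖f r t‖ₑ ^ 2 ≠ ∞ := by
      intro h
      apply hN
      rw [h, ENNReal.top_mul]
      simpa using hr0
    by_cases hc : cc δ a β j r₁ r = 0
    · refine ⟨fun _ => 0, continuous_const, fun _ => le_rfl, fun θ _ => ?_, by simp⟩
      refine (hgle θ r).trans ?_
      simp [hG, hc]
    · have hmem := cc_zero δ a β hβs j r₁ r hc
      have hl : 0 < lam r := by simp only [hlam]; positivity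
      obtain ⟨v, hv, hvle, hve⟩ := vconstruct (k r) (f r) (hkm r) S hS hfr
      obtain ⟨hcont, hbd⟩ := conv_main' χ hχ X ε hX hε h1 (lam r) hl v hv
      set u : ℝ → ℂ := fun θ => ∫ t in Ico 0 (2 * π), k r (θ - t) * v t with hu
      refine ⟨fun θ => (‖cc δ a β j r₁ r‖ * r) ^ 2 * ‖u θ‖ ^ 2, ?_, fun x => by positivity, ?_, ?_⟩
      · exact continuous_const.mul (hcont.norm.pow 2)
      · intro θ hθ
        refine (hgle θ r).trans ?_
        rw [hGn θ r hr0, ENNReal.ofReal_mul (by positivity), ENNReal.ofReal_pow (norm_nonneg (u θ)), ofReal_norm]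
        gcongr
        rcases hve θ hθ with h | h
        · rw [h]; simp
        · rw [h]
      · calc ∫⁻ θ in Ico 0 (2 * π), ENNReal.ofReal ((‖cc δ a β j r₁ r‖ * r) ^ 2 * ‖u θ‖ ^ 2)
            = ENNReal.ofReal ((‖cc δ a β j r₁ r‖ * r) ^ 2) * ∫⁻ θ in Ico 0 (2 * π), ‖u θ‖ₑ ^ 2 := by
              rw [← lintegral_const_mul' _ _ (by simp)]
              refine lintegral_congr fun θ => ?_
              rw [ENNReal.ofReal_mul (by positivity), ENNReal.ofReal_pow (norm_nonneg (u θ)), ofReal_norm]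
          _ ≤ ENNReal.ofReal ((‖cc δ a β j r₁ r‖ * r) ^ 2) * (ENNReal.ofReal (CC / lam r) *
                ∫⁻ t in Ico 0 (2 * π), ‖f r t‖ₑ ^ 2) := by
              gcongr
              exact hbd.trans (by gcongr)
          _ = ENNReal.ofReal ((‖cc δ a β j r₁ r‖ * r) ^ 2 * (CC / lam r)) *
                ∫⁻ t in Ico 0 (2 * π), ‖f r t‖ₑ ^ 2 := by
              rw [ENNReal.ofReal_mul (by positivity), mul_assoc]
          _ ≤ ENNReal.ofReal (E ^ 2 * CC * (4 / 3) / ((2 : ℝ) ^ (j : ℝ) * r₁) * r) *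
                ∫⁻ t in Ico 0 (2 * π), ‖f r t‖ₑ ^ 2 := by
              refine mul_le_mul' (ENNReal.ofReal_le_ofReal ?_) le_rfl
              calc (‖cc δ a β j r₁ r‖ * r) ^ 2 * (CC / lam r) ≤ (E * r) ^ 2 * (CC / lam r) := by
                    gcongr; exact hcc j r₁ r
                _ = E ^ 2 * CC * (r₁ + r) / ((2 : ℝ) ^ (j : ℝ) * r₁) * r := by
                    simp only [hlam]
                    have : 0 < r₁ + r := by positivity
                    field_simp
                _ ≤ _ := by gcongr; exact hmem.2
          _ = _ := by
              rw [ENNReal.ofReal_mul (by positivity)]; ring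
  · filter_upwards [ae_restrict_mem measurableSet_Ioi] with r hr θ
    have hr0 : 0 < r := hr
    refine (hgle θ r).trans ?_
    by_cases hfr : ∫⁻ t in Ico 0 (2 * π), ‖f r t‖ₑ ^ 2 = ∞
    · rw [hfr, ENNReal.top_mul (by simpa using hr0), ENNReal.mul_top]
      · exact le_top
      · rw [Ne, ENNReal.ofReal_eq_zero, not_le]; positivity
    by_cases hc : cc δ a β j r₁ r = 0
    · simp [hG, hc]
    · have hle := hr43 r hc
      have hib := inner_bound (k r) (f r) (hkm r) (X * π) (by positivity) (hkB r) hfr θ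
      rw [hGn θ r hr0]
      calc _ ≤ ENNReal.ofReal ((‖cc δ a β j r₁ r‖ * r) ^ 2) * (ENNReal.ofReal (2 * π * (X * π) ^ 2) *
              ∫⁻ t in Ico 0 (2 * π), ‖f r t‖ₑ ^ 2) := by gcongr
        _ = ENNReal.ofReal ((‖cc δ a β j r₁ r‖ * r) ^ 2 * (2 * π * (X * π) ^ 2)) *
              ∫⁻ t in Ico 0 (2 * π), ‖f r t‖ₑ ^ 2 := by
            rw [ENNReal.ofReal_mul (p := (‖cc δ a β j r₁ r‖ * r) ^ 2) (by positivity), mul_assoc (ENNReal.ofReal _)]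
        _ ≤ ENNReal.ofReal ((E ^ 2 * (4 / 3) * (2 * π * (X * π) ^ 2) + 1) * r) *
              ∫⁻ t in Ico 0 (2 * π), ‖f r t‖ₑ ^ 2 := by
            refine mul_le_mul' (ENNReal.ofReal_le_ofReal ?_) le_rfl
            calc (‖cc δ a β j r₁ r‖ * r) ^ 2 * (2 * π * (X * π) ^ 2)
                ≤ (E * r) ^ 2 * (2 * π * (X * π) ^ 2) := by gcongr; exact hcc j r₁ r
              _ = E ^ 2 * r * (2 * π * (X * π) ^ 2) * r := by ring
              _ ≤ E ^ 2 * (4 / 3) * (2 * π * (X * π) ^ 2) * r := by gcongr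
              _ ≤ _ := by nlinarith
        _ = _ := by
            rw [ENNReal.ofReal_mul (by positivity)]; ring

theorem stmt12 (δ : ℝ) (hδ : 0 ≤ δ) (a : ℝ → ℂ) (ha : IsSymbol0 a)
    (β : ℝ → ℝ) (hβ : ContDiff ℝ (⊤ : ℕ∞) β)
    (hβs : Function.support β ⊆ Set.Icc (3 / 8) (4 / 3)) :
    ∃ ε₀ : ℝ, 0 < ε₀ ∧ ∀ ε : ℝ, 0 < ε → ε ≤ ε₀ →
      ∀ χ : ℝ → ℝ, ContDiff ℝ (⊤ : ℕ∞) χ → (∀ x, χ (-x) = χ x) →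
        Function.support χ ⊆ Set.Icc (-ε) ε →
        (∀ x ∈ Set.Icc (-(ε / 2)) (ε / 2), χ x = 1) →
        ∃ C : ℝ≥0, ∀ (j : ℕ), 1 ≤ j → ∀ f : ℝ → ℝ → ℂ,
          polarLp 2 (TH δ a β χ j f) ≤
            (C : ℝ≥0∞) * (2 : ℝ≥0∞) ^ (-(j : ℝ) * (3 / 2 + δ)) *
              (2 : ℝ≥0∞) ^ (-(j : ℝ) / 2) * polarLp 2 f := by
  obtain ⟨C₁, hC₁, hcc⟩ := cc_bound δ hδ a ha β hβ.continuous hβs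
  refine ⟨1, one_pos, fun ε hε _ χ hχ _ hχs h1 => ?_⟩
  obtain ⟨X, hX⟩ : ∃ X : ℝ, ∀ x, |χ x| ≤ X := by
    obtain ⟨X, hX⟩ := isCompact_Icc.exists_bound_of_continuousOn (s := Set.Icc (-ε) ε)
      hχ.continuous.continuousOn
    refine ⟨X, fun x => ?_⟩
    by_cases hx : x ∈ Set.Icc (-ε) ε
    · exact hX x hx
    · have h0 : χ x = 0 := by
        by_contra h
        exact hx (hχs h)
      rw [h0, abs_zero]
      exact (norm_nonneg _).trans (hX 0 ⟨by linarith, hε.le⟩)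
  set CC : ℝ := 32 * π ^ 2 + 8 * π ^ 2 * ((1 + X) * (8 / ε ^ 2)) ^ 2 with hCC
  have hCC0 : 0 < CC := by positivity
  set K : ℝ := (4 / 3) ^ 3 * C₁ ^ 2 * CC with hK
  have hK0 : 0 < K := by positivity
  refine ⟨(√K).toNNReal, fun j _ f => ?_⟩
  set P : ℝ≥0∞ := ∫⁻ r in Ioi (0:ℝ), (∫⁻ t in Ico 0 (2 * π), ‖f r t‖ₑ ^ 2) * ENNReal.ofReal r with hP
  have hpol : ∀ h : ℝ → ℝ → ℂ, polarLp 2 h =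
      (∫⁻ r in Ioi (0:ℝ), (∫⁻ t in Ico 0 (2 * π), ‖h r t‖ₑ ^ 2) * ENNReal.ofReal r) ^ (1 / 2 : ℝ) := by
    intro h
    unfold polarLp
    simp only [ENNReal.rpow_two, enorm_eq_nnnorm]
  have h2x : ∀ x : ℝ, (2 : ℝ≥0∞) ^ x = ENNReal.ofReal ((2:ℝ) ^ x) := fun x => by
    rw [← ENNReal.ofReal_rpow_of_pos (by norm_num)]; simp
  set E : ℝ := (2 : ℝ) ^ (-(j : ℝ) * (3 / 2 + δ)) with hE
  have hE0 : 0 < E := by positivity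
  have hconst : ((√K).toNNReal : ℝ≥0∞) * (2 : ℝ≥0∞) ^ (-(j : ℝ) * (3 / 2 + δ)) *
      (2 : ℝ≥0∞) ^ (-(j : ℝ) / 2) = ENNReal.ofReal (√K * E * (2:ℝ) ^ (-(j : ℝ) / 2)) := by
    rw [h2x, h2x, ENNReal.ofReal_mul (by positivity), ENNReal.ofReal_mul (by positivity)]
    rfl
  rw [hconst, hpol, hpol, ← hP]
  by_cases hPt : P = ∞
  · rw [hPt, ENNReal.top_rpow_of_pos (by norm_num), ENNReal.mul_top]
    · exact le_top
    · rw [Ne, ENNReal.ofReal_eq_zero, not_le]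
      have := Real.sqrt_pos.2 hK0
      positivity
  have hmain : ∫⁻ r in Ioi (0:ℝ), (∫⁻ t in Ico 0 (2 * π), ‖TH δ a β χ j f r t‖ₑ ^ 2) * ENNReal.ofReal r ≤
      ENNReal.ofReal ((√K * E * (2:ℝ) ^ (-(j : ℝ) / 2)) ^ 2) * P := by
    set c : ℝ≥0∞ := ENNReal.ofReal (4 / 3) *
      (ENNReal.ofReal ((E * C₁) ^ 2 * CC * (4 / 3) / (2 : ℝ) ^ (j : ℝ)) * P) with hc
    have hpt : ∀ᵐ r ∂(volume.restrict (Ioi (0:ℝ))),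
        (∫⁻ t in Ico 0 (2 * π), ‖TH δ a β χ j f r t‖ₑ ^ 2) * ENNReal.ofReal r ≤
          (Iic (4 / 3 : ℝ)).indicator (fun _ => c) r := by
      filter_upwards [ae_restrict_mem measurableSet_Ioi] with r hr
      have hr0 : 0 < r := hr
      by_cases hr4 : r ∈ Iic (4 / 3 : ℝ)
      · rw [indicator_of_mem hr4]
        have := fixed_r1 δ a β hβs C₁ hC₁ hcc χ hχ.continuous X ε hX hε h1 j f r hr0 hPt
        calc _ ≤ _ := mul_le_mul' this le_rfl
          _ = c := by
            have hsplit : ENNReal.ofReal ((E * C₁) ^ 2 * CC * (4 / 3) / (2 : ℝ) ^ (j : ℝ)) =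
                ENNReal.ofReal ((E * C₁) ^ 2 * CC * (4 / 3) / ((2 : ℝ) ^ (j : ℝ) * r)) *
                  ENNReal.ofReal r := by
              rw [← ENNReal.ofReal_mul (by positivity)]
              congr 1
              field_simp
            rw [hc, hsplit]
            ring
      · rw [indicator_of_notMem hr4]
        have hz : ∀ t, TH δ a β χ j f r t = 0 := by
          intro t
          unfold TH
          rw [← integral_zero ℝ ℂ (μ := volume.restrict (Ioi (0:ℝ)))]
          refine setIntegral_congr_fun measurableSet_Ioi fun s hs => ?_
          have hs0 : 0 < s := hs
          have hcz : cc δ a β j r s = 0 := by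
            by_contra hne
            have := (cc_zero δ a β hβs j r s hne).2
            exact hr4 (show r ≤ 4 / 3 by linarith)
          simp only [inner_eq, hcz, zero_mul]
        simp [hz]
    calc _ ≤ ∫⁻ r in Ioi (0:ℝ), (Iic (4 / 3 : ℝ)).indicator (fun _ => c) r := lintegral_mono_ae hpt
      _ = c * ENNReal.ofReal (4 / 3) := by
        rw [lintegral_indicator measurableSet_Iic, Measure.restrict_restrict measurableSet_Iic,
          inter_comm, Ioi_inter_Iic, lintegral_const, Measure.restrict_apply_univ, Real.volume_Ioc,
          sub_zero]
      _ = ENNReal.ofReal ((4 / 3) * ((E * C₁) ^ 2 * CC * (4 / 3) / (2 : ℝ) ^ (j : ℝ)) * (4 / 3)) * P := by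
        rw [hc, ENNReal.ofReal_mul (by positivity), ENNReal.ofReal_mul (by norm_num)]
        ring
      _ = _ := by
        congr 2
        have hh : ((2:ℝ) ^ (-(j : ℝ) / 2)) ^ 2 = ((2 : ℝ) ^ (j : ℝ))⁻¹ := by
          rw [← Real.rpow_natCast, ← Real.rpow_mul (by norm_num), ← Real.rpow_neg (by norm_num)]
          congr 1
          push_cast
          ring
        rw [mul_pow (√K * E), mul_pow (√K), hh, Real.sq_sqrt hK0.le, hK]
        field_simp
  calc _ ≤ (ENNReal.ofReal ((√K * E * (2:ℝ) ^ (-(j : ℝ) / 2)) ^ 2) * P) ^ (1 / 2 : ℝ) :=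
        ENNReal.rpow_le_rpow hmain (by norm_num)
    _ = _ := by
      rw [ENNReal.mul_rpow_of_nonneg _ _ (by norm_num), ENNReal.ofReal_pow (by positivity),
        ← ENNReal.rpow_two, ← ENNReal.rpow_mul]
      norm_num

end
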